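/- arXiv:2512.07106 — 4 statements merged into one kernel-verified Lean document; each statement's English description precedes it below -/
import Mathlib

section
/- Let K and L be countably infinite fields (with the discrete topology) such that their multiplicative groups K* and L* are isomorphic, and let ρ : K* → L* be a group isomorphism. Suppose the ergodic K*-actions on (K̂, m_{K̂}) (the dual action) and on (L̂, m_{L̂}) (the dual action via ρ) are not disjoint. Then K and L are isomorphic as fields; more precisely, there exists a group homomorphism w : K* → L* with finite image such that the map κ : K → L defined by κ(0) = 0 and κ(x) = w(x)ρ(x) for x ∈ K* is a field isomorphism. Furthermore, every non-trivial K*-invariant and K*-ergodic coupling of (K̂, m_{K̂}) and (L̂, m_{L̂}) has the form (e, b*)_*μ for some b ∈ L*, where μ(f) = (1/|Im(w)|) Σ_{c ∈ Im(w)} ∫_{L̂} f(κ*(η), c*η) dm_{L̂}(η) for continuous f on K̂ × L̂, and κ* : L̂ → K̂, η ↦ η ∘ κ, is the isomorphism induced by κ. -/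
open MeasureTheory Filter
open scoped ENNReal

noncomputable section

abbrev AddDual (K : Type*) [AddCommGroup K] [TopologicalSpace K] : Type _ :=
  PontryaginDual (Multiplicative K)

def dualComp {A B : Type*} [AddCommGroup A] [AddCommGroup B]
    [TopologicalSpace A] [DiscreteTopology A] [TopologicalSpace B]
    (f : A →+ B) (ξ : AddDual B) : AddDual A :=
  ξ.comp ⟨AddMonoidHom.toMultiplicative f, continuous_of_discreteTopology⟩

def dualSmul {K : Type*} [Field K] [TopologicalSpace K] [DiscreteTopology K]
    (a : K) (ξ : AddDual K) : AddDual K :=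
  dualComp (AddMonoidHom.mulLeft a) ξ

def IsErgodicFamily {X : Type*} [MeasurableSpace X] {ι : Sort*}
    (T : ι → X → X) (μ : Measure X) : Prop :=
  ∀ s : Set X, MeasurableSet s → (∀ i, T i ⁻¹' s = s) → μ s = 0 ∨ μ s = 1

/-!
A coupling `θ` is determined by its coefficients `∫ ξ(a) η(b) dθ(ξ, η)`, so a non-trivial invariant
one has a non-zero coefficient with `a` and `b` both non-zero. Disintegrate `θ` over the dual of `L`
and let `f_a` be the `a`-th Fourier coefficient of the fibre measures; invariance gives
`f_a(η) = f_1(ρ(a) η)`.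

The engine is rigidity: if all coefficients at non-zero points of a finite measure on the dual of
`K` agree, the measure is a combination of Haar measure and the point mass at `1`, so the common
value is the mass of `1`. Applied to `ξ / ξ'` for two independent points of a fibre, this turns a
non-zero coefficient into atoms of the fibres. Applied to `(a ξ)(a' ξ') / (a'' ξ'')` with
`a + a' = a''`, for three points of a fibre, it bounds the triple correlations
`∫ f_a f_{a'} conj(f_{a''})` from below by the mass of the triple diagonal, uniformly in
`a, a', a''`. Approximating `f_1` by a trigonometric polynomial without constant term yields a
finite set `F` of non-zero elements such that `s₁ ρ(x) + s₂ ρ(y) = s₃ ρ(z)` for some `sᵢ` in `F`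
whenever `x + y = z`: up to finitely many coefficients, `ρ` is additive. Passing to the limit along
an ultrafilter, some finitely-valued multiple of `ρ` is additive, and after normalisation it is the
field isomorphism `κ = w ρ`.

For the classification, rigidity for the finite-index subgroup `ker w` identifies a non-zero
coefficient with the mass of a graph `{ξ = κ*(c η)}`, so one of these graphs has positive mass. The
group permutes the graphs belonging to a coset of the image of `w`, which are almost disjoint;
ergodicity makes them carry `θ`, with equal weights, and invariance under `ker w` makes each
restriction a multiple of the push-forward of Haar measure.
-/

section AlmostAdditive

open scoped Pointwise

variable {K L : Type*}

theorem eventually_cofinite_eq_zero_of_mul_eq_mul [Field L] {f : K → L}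
    (hf : Function.Injective f) {P Q : Set L} (hP : P.Finite) (hQ : Q.Finite) (a : L) :
    ∀ᶠ y in cofinite, ∀ c ∈ P, ∀ d ∈ Q, c * a = d * f y → d = 0 := by
  have hfin : (Set.image2 (fun c d => c * a / d) P Q).Finite := hP.image2 _ hQ
  filter_upwards [hf.tendsto_cofinite.eventually hfin.eventually_cofinite_notMem]
    with y hy c hc d hd h
  by_contra hd0
  exact hy ⟨c, hc, d, hd, (div_eq_iff hd0).2 (h.trans (mul_comm _ _))⟩

theorem map_add_of_eventually_cofinite [AddGroup K] [Infinite K] [AddGroup L] {φ : K → L}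
    (h : ∀ x, ∀ᶠ y in cofinite, φ (x + y) = φ x + φ y) (x y : K) : φ (x + y) = φ x + φ y := by
  have hx : ∀ᶠ z in cofinite, φ (x + (y + z)) = φ x + φ (y + z) :=
    (add_right_injective y).tendsto_cofinite.eventually (h x)
  obtain ⟨z, hxyz, hx, hy⟩ := ((h (x + y)).and (hx.and (h y))).exists
  rw [hy, ← add_assoc, ← add_assoc, hxyz] at hx
  exact add_right_cancel hx

theorem eq_and_eq_of_eventually_mul_add_eq [Field L] {f : K → L} (hf : Function.Injective f)
    {l : Filter K} [l.NeBot] (hl : l ≤ cofinite) {s t u v : L} (hs : s ≠ 0)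
    (h : ∀ᶠ k in l, s * (f k + u) = t * (f k + v)) : s = t ∧ u = v := by
  obtain ⟨i, hi⟩ := h.exists
  obtain ⟨j, hj, hij⟩ := (h.and (hl (Set.finite_singleton i).compl_mem_cofinite)).exists
  have hst : s = t := by
    have : f j - f i ≠ 0 := sub_ne_zero.2 fun hfij => hij (hf hfij)
    exact mul_right_cancel₀ this (by linear_combination hj - hi)
  subst hst
  exact ⟨rfl, add_left_cancel (mul_left_cancel₀ hs hi)⟩

theorem coeff_eq_coeff_of_map_add [AddGroup K] [Infinite K] [Field L] {A B c : K → L}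
    (hA : ∀ x y, A (x + y) = A x + A y) (hA_inj : Function.Injective A)
    (hB : ∀ x y, B (x + y) = B x + B y) (hBA : ∀ x, B x = c x * A x)
    (hc : (Set.range c).Finite) {x y : K} (hx : x ≠ 0) (hy : y ≠ 0) : c x = c y := by
  have hA0 : A 0 = 0 := by simpa using hA 0 0
  have generic {x : K} (hx : x ≠ 0) : ∀ᶠ z in cofinite, c x = c z := by
    have hdiff : (Set.range c - Set.range c).Finite := hc.sub hc
    filter_upwards [eventually_cofinite_eq_zero_of_mul_eq_mul hA_inj hdiff hdiff (A x)] with z hz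
    have hsplit : (c (x + z) - c x) * A x = (c z - c (x + z)) * A z := by
      linear_combination hBA x + hBA z - hBA (x + z) + hB x z - c (x + z) * hA x z
    have hz := hz _ (Set.sub_mem_sub ⟨_, rfl⟩ ⟨_, rfl⟩) _ (Set.sub_mem_sub ⟨_, rfl⟩ ⟨_, rfl⟩) hsplit
    have hAx : A x ≠ 0 := fun h => hx (hA_inj (h.trans hA0.symm))
    rw [hz, zero_mul, mul_eq_zero, or_iff_left hAx] at hsplit
    linear_combination -hz - hsplit
  obtain ⟨z, hxz, hyz⟩ := ((generic hx).and (generic hy)).exists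
  exact hxz.trans hyz.symm

/-- `R` is additive up to coefficients from the finite set `F ∌ 0`. Sums equal to zero are
excluded: for the map `ρ` extended by zero, the relation is only known between units. -/
structure IsAlmostAdditive [Add K] [Zero K] [Field L] (R : K → L) (F : Set L) : Prop where
  finite : F.Finite
  zero_notMem : 0 ∉ F
  exists_map_add_eq : ∀ a b, a + b ≠ 0 → ∃ s ∈ F, ∃ t ∈ F, R (a + b) = s * R a + t * R b

namespace IsAlmostAdditive

variable [Field L] {R : K → L} {F : Set L}

theorem ne_zero [Add K] [Zero K] (hR : IsAlmostAdditive R F) {s : L} (hs : s ∈ F) : s ≠ 0 :=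
  fun h => hR.zero_notMem (h ▸ hs)

variable [AddCommGroup K] [Infinite K]

-- A limit along an ultrafilter turns the finitely many coefficients into constants.
theorem exists_eventually_map_add_eq (hR : IsAlmostAdditive R F) (g : K → K)
    (hg : Function.Injective g) (x : K) :
    ∃ s ∈ F, ∃ t ∈ F, ∀ᶠ k in hyperfilter K, R (g k + x) = s * R (g k) + t * R x := by
  have h : ∀ᶠ k in hyperfilter K,
      ∃ p ∈ F ×ˢ F, R (g k + x) = p.1 * R (g k) + p.2 * R x := by
    have hne : ∀ᶠ k in hyperfilter K, g k ≠ -x := hyperfilter_le_cofinite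
      (hg.tendsto_cofinite.eventually (Set.finite_singleton (-x)).eventually_cofinite_notMem)
    filter_upwards [hne] with k hk
    obtain ⟨s, hs, t, ht, h⟩ :=
      hR.exists_map_add_eq (g k) x fun h0 => hk (eq_neg_of_add_eq_zero_left h0)
    exact ⟨(s, t), ⟨hs, ht⟩, h⟩
  obtain ⟨⟨s, t⟩, ⟨hs, ht⟩, h⟩ :=
    (Ultrafilter.eventually_exists_mem_iff (hR.finite.prod hR.finite)).1 h
  exact ⟨s, hs, t, ht, h⟩

theorem exists_additive_multiple (hR : IsAlmostAdditive R F) (hinj : Function.Injective R) :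
    ∃ d : K → L, (∀ x, d x ∈ F / F) ∧
      ∀ x y, d (x + y) * R (x + y) = d x * R x + d y * R y := by
  choose s hs t ht hst using hR.exists_eventually_map_add_eq id Function.injective_id
  let d x := t x / s x
  have hd x : d x ∈ F / F := Set.div_mem_div (ht x) (hs x)
  have expand x : ∀ᶠ k in hyperfilter K, R (k + x) = s x * (R k + d x * R x) := by
    filter_upwards [hst x] with k hk
    rw [← id_eq k, hk, mul_add, ← mul_assoc, mul_div_cancel₀ _ (hR.ne_zero (hs x))]
  have increment x y : ∃ e ∈ F / (F * F), d (x + y) * R (x + y) = d x * R x + e * R y := by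
    obtain ⟨s', hs', t', ht', h⟩ :=
      hR.exists_eventually_map_add_eq (· + x) (add_left_injective x) y
    have hs'x : s' * s x ≠ 0 := mul_ne_zero (hR.ne_zero hs') (hR.ne_zero (hs x))
    refine ⟨t' / (s' * s x), Set.div_mem_div ht' (Set.mul_mem_mul hs' (hs x)), ?_⟩
    refine (eq_and_eq_of_eventually_mul_add_eq hinj (l := hyperfilter K) hyperfilter_le_cofinite
      (hR.ne_zero (hs (x + y))) (t := s' * s x) ?_).2
    filter_upwards [h, expand x, expand (x + y)] with k hk hkx hkxy
    rw [← hkxy, ← add_assoc, hk, hkx]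
    linear_combination R y * (mul_div_cancel₀ t' hs'x).symm
  refine ⟨d, hd, map_add_of_eventually_cofinite (φ := fun x => d x * R x) fun x => ?_⟩
  have hfin : (F / F - F / (F * F)).Finite :=
    (hR.finite.div hR.finite).sub (hR.finite.div (hR.finite.mul hR.finite))
  filter_upwards [eventually_cofinite_eq_zero_of_mul_eq_mul hinj hfin hfin (R x)] with y hy
  obtain ⟨e, he, hxy⟩ := increment x y
  obtain ⟨e', he', hyx⟩ := increment y x
  rw [add_comm y x] at hyx
  have := hy _ (Set.sub_mem_sub (hd x) he') _ (Set.sub_mem_sub (hd y) he)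
    (by linear_combination hyx - hxy)
  rw [hxy, ← sub_eq_zero.1 this]

end IsAlmostAdditive

variable [Field K] [Infinite K] [Field L] {F : Set L}

theorem map_mul_mul_map_one_of_eq_mul {R : K →*₀ L} {φ : K →+ L} {d : K → L}
    (hd : (Set.range d).Finite) (hd0 : ∀ x, d x ≠ 0) (hφ : ∀ x, φ x = d x * R x) (a x : K) :
    φ (a * x) * φ 1 = φ a * φ x := by
  have hφ_inj : Function.Injective φ := (injective_iff_map_eq_zero φ).2 fun x hx =>
    (map_eq_zero R).1 ((mul_eq_zero.1 (hφ x ▸ hx)).resolve_left (hd0 x))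
  rcases eq_or_ne a 0 with rfl | ha
  · simp
  rcases eq_or_ne x 0 with rfl | hx
  · simp
  have hRa : R a ≠ 0 := (map_ne_zero R).2 ha
  have hratio : d (a * x) / d x = d (a * 1) / d 1 := by
    refine coeff_eq_coeff_of_map_add (A := φ) (B := fun x => φ (a * x) / R a)
      (c := fun x => d (a * x) / d x) (map_add φ) hφ_inj (fun x y => ?_) (fun x => ?_)
      (hd.div hd |>.subset ?_) hx one_ne_zero
    · rw [mul_add, map_add, add_div]
    · simp only [hφ, map_mul]
      field_simp [hd0 x]
    · rintro _ ⟨x, rfl⟩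
      exact Set.div_mem_div ⟨_, rfl⟩ ⟨_, rfl⟩
  rw [mul_one, div_eq_div_iff (hd0 x) (hd0 1)] at hratio
  simp only [hφ, map_mul, map_one]
  linear_combination R a * R x * hratio

theorem IsAlmostAdditive.exists_ringHom {R : K →*₀ L} (hR : IsAlmostAdditive R F)
    (hinj : Function.Injective R) :
    ∃ κ : K →+* L, (Set.range fun x => κ x / R x).Finite := by
  obtain ⟨d, hd, hadd⟩ := hR.exists_additive_multiple hinj
  have hd_fin : (Set.range d).Finite :=
    (hR.finite.div hR.finite).subset (Set.range_subset_iff.2 hd)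
  have hd0 x : d x ≠ 0 := by
    obtain ⟨s, hs, t, ht, h⟩ := hd x
    exact h ▸ div_ne_zero (hR.ne_zero hs) (hR.ne_zero ht)
  let φ : K →+ L := AddMonoidHom.mk' (fun x => d x * R x) hadd
  have hmul a x : φ (a * x) * φ 1 = φ a * φ x :=
    map_mul_mul_map_one_of_eq_mul hd_fin hd0 (fun _ => rfl) a x
  have hφ1 : φ 1 = d 1 := by simp [φ]
  have hφ10 : φ 1 ≠ 0 := hφ1 ▸ hd0 1
  let κ : K →+* L :=
    { toFun x := φ x / φ 1
      map_one' := div_self hφ10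
      map_mul' a x := by
        rw [div_mul_div_comm, ← hmul, mul_div_mul_right _ _ hφ10]
      map_zero' := by rw [map_zero, zero_div]
      map_add' x y := by rw [map_add, add_div] }
  refine ⟨κ, ((hd_fin.div (Set.finite_singleton (φ 1))).insert 0).subset ?_⟩
  rintro _ ⟨x, rfl⟩
  rcases eq_or_ne x 0 with rfl | hx
  · simp
  · have hRx : R x ≠ 0 := (map_ne_zero R).2 hx
    refine Or.inr ⟨d x, ⟨x, rfl⟩, φ 1, rfl, ?_⟩
    simp only [κ, φ, RingHom.coe_mk, MonoidHom.coe_mk, OneHom.coe_mk, AddMonoidHom.mk'_apply]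
    field_simp

theorem surjective_of_finite_range_div {R : K →*₀ L} (hR : Function.Surjective R) (κ : K →+* L)
    (hfin : (Set.range fun x => κ x / R x).Finite) : Function.Surjective κ := by
  let _ : Algebra K L := κ.toAlgebra
  have : Finite (Set.range fun x => κ x / R x) := hfin
  have mem_span x : R x ∈ Submodule.span K {(κ x / R x)⁻¹} := by
    refine Submodule.mem_span_singleton.2 ⟨x, ?_⟩
    rw [Algebra.smul_def, inv_div]
    rcases eq_or_ne x 0 with rfl | hx
    · simp
    · exact mul_div_cancel₀ _ ((map_ne_zero κ).2 hx)
  obtain ⟨v, hv⟩ := Subspace.exists_eq_top_of_iUnion_eq_univ (k := K) (E := L)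
    (p := fun v : Set.range fun x => κ x / R x => Submodule.span K {(v : L)⁻¹})
    (Set.eq_univ_of_forall fun l => by
      obtain ⟨x, rfl⟩ := hR l
      exact Set.mem_iUnion.2 ⟨⟨_, x, rfl⟩, mem_span x⟩)
  have span_eq_top l : ∃ x, κ x * (v : L)⁻¹ = l :=
    Submodule.mem_span_singleton.1 (hv ▸ Submodule.mem_top (x := l))
  obtain ⟨y, hy⟩ := span_eq_top 1
  intro l
  obtain ⟨x, rfl⟩ := span_eq_top l
  exact ⟨x / y, by rw [map_div₀, div_eq_mul_inv, inv_eq_of_mul_eq_one_right hy]⟩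

theorem exists_ringEquiv_eq_mul (ρ : Kˣ ≃* Lˣ) (hF : F.Finite) (hF0 : 0 ∉ F)
    (h : ∀ x y z : Kˣ, (x : K) + y = z → ∃ s₁ ∈ F, ∃ s₂ ∈ F, ∃ s₃ ∈ F,
      s₁ * (ρ x : L) + s₂ * (ρ y : L) = s₃ * (ρ z : L)) :
    ∃ (w : Kˣ →* Lˣ) (κ : K ≃+* L), (Set.range w).Finite ∧
      ∀ x : Kˣ, κ (x : K) = w x * (ρ x : L) := by
  classical
  let e : K ≃* L := (WithZero.withZeroUnitsEquiv (G := K)).symm.trans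
    (ρ.withZero.trans WithZero.withZeroUnitsEquiv)
  let R : K →*₀ L := e.toMonoidWithZeroHom
  have hRρ (x : Kˣ) : R x = ρ x := by simp [R, e]
  have hR : IsAlmostAdditive R (insert 1 (F / F)) :=
    { finite := (hF.div hF).insert 1
      zero_notMem := by
        rintro (h | ⟨s, hs, t, ht, hst⟩)
        · exact zero_ne_one h
        · rcases div_eq_zero_iff.1 hst with rfl | rfl <;> contradiction
      exists_map_add_eq a b hab := by
        rcases eq_or_ne a 0 with rfl | ha
        · exact ⟨1, Set.mem_insert _ _, 1, Set.mem_insert _ _, by simp⟩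
        rcases eq_or_ne b 0 with rfl | hb
        · exact ⟨1, Set.mem_insert _ _, 1, Set.mem_insert _ _, by simp⟩
        obtain ⟨s₁, h₁, s₂, h₂, s₃, h₃, hs⟩ := h (.mk0 a ha) (.mk0 b hb) (.mk0 _ hab) rfl
        simp only [← hRρ, Units.val_mk0] at hs
        have hs₃ : s₃ ≠ 0 := fun h0 => hF0 (h0 ▸ h₃)
        refine ⟨s₁ / s₃, .inr ⟨_, h₁, _, h₃, rfl⟩, s₂ / s₃, .inr ⟨_, h₂, _, h₃, rfl⟩, ?_⟩
        field_simp
        exact (mul_comm _ _).trans hs.symm }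
  obtain ⟨κ, hκ⟩ := hR.exists_ringHom e.injective
  let κ' : K ≃+* L :=
    RingEquiv.ofBijective κ ⟨κ.injective, surjective_of_finite_range_div e.surjective κ hκ⟩
  refine ⟨Units.map (κ : K →* L) / ρ.toMonoidHom, κ', ?_, fun x => ?_⟩
  · refine Set.Finite.of_finite_image (f := Units.val) (hκ.subset ?_) Units.val_injective.injOn
    rintro _ ⟨_, ⟨x, rfl⟩, rfl⟩
    exact ⟨x, by simp [hRρ]⟩
  · change κ x = _
    simp

end AlmostAdditive

section TrigonometricPolynomials

variable {X : Type*} [TopologicalSpace X] [CompactSpace X] {M : Submonoid C(X, ℂ)}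

theorem dense_span_of_separatesPoints (hstar : ∀ f ∈ M, star f ∈ M)
    (hsep : ∀ x y, (∀ f ∈ M, f x = f y) → x = y) :
    Dense (Submodule.span ℂ (M : Set C(X, ℂ)) : Set C(X, ℂ)) := by
  let A : StarSubalgebra ℂ C(X, ℂ) :=
    { toSubalgebra := Algebra.adjoin ℂ M
      star_mem' := by
        change Algebra.adjoin ℂ (M : Set C(X, ℂ)) ≤ star (Algebra.adjoin ℂ (M : Set C(X, ℂ)))
        exact Algebra.adjoin_le fun f hf => Algebra.subset_adjoin (hstar f hf) }
  have hA : Subalgebra.toSubmodule A.toSubalgebra = Submodule.span ℂ (M : Set C(X, ℂ)) :=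
    (Algebra.adjoin_eq_span ℂ _).trans (by rw [Submonoid.closure_eq])
  have hA_sep : A.SeparatesPoints := by
    intro x y hxy
    obtain ⟨f, hf, hne⟩ : ∃ f ∈ M, f x ≠ f y := by
      by_contra! h
      exact hxy (hsep x y h)
    exact ⟨f, ⟨f, Algebra.subset_adjoin hf, rfl⟩, hne⟩
  have hA_top := ContinuousMap.starSubalgebra_topologicalClosure_eq_top_of_separatesPoints A hA_sep
  rw [← hA]
  exact dense_iff_closure_eq.2 (congrArg SetLike.coe hA_top)

variable [MeasurableSpace X] [BorelSpace X]

theorem integrable_continuousMap (f : C(X, ℂ)) (μ : Measure X) [IsFiniteMeasure μ] :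
    Integrable f μ :=
  f.continuous.integrable_of_hasCompactSupport (.of_compactSpace _)

theorem integral_eq_of_mem_span {μ ν : Measure X} [IsFiniteMeasure μ] [IsFiniteMeasure ν]
    {S : Set C(X, ℂ)} (h : ∀ f ∈ S, ∫ x, f x ∂μ = ∫ x, f x ∂ν) {p : C(X, ℂ)}
    (hp : p ∈ Submodule.span ℂ S) : ∫ x, p x ∂μ = ∫ x, p x ∂ν := by
  induction hp using Submodule.span_induction with
  | mem f hf => exact h f hf
  | zero => simp
  | add p q _ _ hp hq =>
    simp only [ContinuousMap.add_apply]
    rw [integral_add (integrable_continuousMap p _) (integrable_continuousMap q _),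
      integral_add (integrable_continuousMap p _) (integrable_continuousMap q _), hp, hq]
  | smul c p _ hp =>
    simp only [ContinuousMap.smul_apply]
    rw [integral_smul, integral_smul, hp]

variable [PolishSpace X]

theorem exists_mem_span_integral_norm_sub_le (hstar : ∀ f ∈ M, star f ∈ M)
    (hsep : ∀ x y, (∀ f ∈ M, f x = f y) → x = y) {μ : Measure X} [IsFiniteMeasure μ]
    {g : X → ℂ} (hg : Integrable g μ) {ε : ℝ} (hε : 0 < ε) :
    ∃ p ∈ Submodule.span ℂ (M : Set C(X, ℂ)), ∫ x, ‖g x - p x‖ ∂μ ≤ ε := by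
  have hdense := (ContinuousMap.toLp_denseRange ℂ μ ℂ ENNReal.one_ne_top).dense_image
    (ContinuousMap.toLp 1 μ ℂ).continuous (dense_span_of_separatesPoints hstar hsep)
  obtain ⟨_, ⟨p, hp, rfl⟩, hdist⟩ := hdense.exists_dist_lt (hg.toL1 g) hε
  refine ⟨p, hp, le_of_eq_of_le ?_ hdist.le⟩
  rw [L1.dist_eq_integral_dist]
  refine integral_congr_ae ?_
  filter_upwards [hg.coeFn_toL1, ContinuousMap.coeFn_toLp (p := 1) (𝕜 := ℂ) μ p] with x hgx hpx
  rw [hgx, hpx, dist_eq_norm]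

theorem measure_eq_of_forall_integral_eq (hstar : ∀ f ∈ M, star f ∈ M)
    (hsep : ∀ x y, (∀ f ∈ M, f x = f y) → x = y) {μ ν : Measure X} [IsFiniteMeasure μ]
    [IsFiniteMeasure ν] (h : ∀ f ∈ M, ∫ x, f x ∂μ = ∫ x, f x ∂ν) : μ = ν := by
  refine ext_of_forall_integral_eq_of_IsFiniteMeasure fun f => ?_
  let g : C(X, ℂ) := ⟨fun x => f x, by fun_prop⟩
  suffices hg : ∫ x, g x ∂μ = ∫ x, g x ∂ν by
    simpa only [g, ContinuousMap.coe_mk, integral_complex_ofReal, Complex.ofReal_inj] using hg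
  rw [← sub_eq_zero, ← norm_le_zero_iff]
  refine le_of_forall_pos_le_add fun ε hε => ?_
  obtain ⟨p, hp, hgp⟩ := exists_mem_span_integral_norm_sub_le hstar hsep
    (integrable_continuousMap g (μ + ν)) hε
  have hint (τ : Measure X) [IsFiniteMeasure τ] : Integrable (fun x => g x - p x) τ :=
    integrable_continuousMap (g - p) τ
  have hsub (τ : Measure X) [IsFiniteMeasure τ] :
      ∫ x, g x ∂τ - ∫ x, p x ∂τ = ∫ x, g x - p x ∂τ :=
    (integral_sub (integrable_continuousMap g τ) (integrable_continuousMap p τ)).symm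
  calc ‖∫ x, g x ∂μ - ∫ x, g x ∂ν‖
      = ‖(∫ x, g x - p x ∂μ) - ∫ x, g x - p x ∂ν‖ := by
        rw [← hsub, ← hsub, integral_eq_of_mem_span h hp, sub_sub_sub_cancel_right]
    _ ≤ ‖∫ x, g x - p x ∂μ‖ + ‖∫ x, g x - p x ∂ν‖ := norm_sub_le _ _
    _ ≤ (∫ x, ‖g x - p x‖ ∂μ) + ∫ x, ‖g x - p x‖ ∂ν :=
        add_le_add (norm_integral_le_integral_norm _) (norm_integral_le_integral_norm _)
    _ = ∫ x, ‖g x - p x‖ ∂(μ + ν) := (integral_add_measure (hint μ).norm (hint ν).norm).symm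
    _ ≤ 0 + ε := by rwa [zero_add]

end TrigonometricPolynomials

section DualEval

variable {K : Type*} [AddCommGroup K] [TopologicalSpace K]

/-- The character of `AddDual K` given by evaluation at `a : K`, as a continuous complex-valued
function. -/
def dualEval (a : K) : C(AddDual K, ℂ) where
  toFun ξ := ξ (Multiplicative.ofAdd a)
  continuous_toFun := continuous_subtype_val.comp <|
    (continuous_eval_const (F := C(Multiplicative K, Circle)) (Multiplicative.ofAdd a)).comp
      (ContinuousMonoidHom.isInducing_toContinuousMap _ _).continuous

@[simp]
theorem dualEval_zero (ξ : AddDual K) : dualEval 0 ξ = 1 := by simp [dualEval]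

theorem dualEval_add (a b : K) (ξ : AddDual K) :
    dualEval (a + b) ξ = dualEval a ξ * dualEval b ξ := by simp [dualEval, ofAdd_add]

theorem dualEval_neg (a : K) (ξ : AddDual K) : dualEval (-a) ξ = star (dualEval a ξ) := by
  simp [dualEval, ofAdd_neg, ← Circle.coe_inv_eq_conj]

@[simp]
theorem norm_dualEval (a : K) (ξ : AddDual K) : ‖dualEval a ξ‖ = 1 := Circle.norm_coe _

@[simp]
theorem dualEval_one (a : K) : dualEval a 1 = 1 := by simp [dualEval]

theorem dualEval_mul (a : K) (ξ ζ : AddDual K) :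
    dualEval a (ξ * ζ) = dualEval a ξ * dualEval a ζ := rfl

theorem dualEval_inv (a : K) (ξ : AddDual K) : dualEval a ξ⁻¹ = star (dualEval a ξ) := by
  exact Circle.coe_inv_eq_conj _

theorem addDual_ext {ξ ζ : AddDual K} (h : ∀ a, dualEval a ξ = dualEval a ζ) : ξ = ζ :=
  PontryaginDual.ext fun a => Subtype.ext (h a.toAdd)

theorem measurable_dualEval [MeasurableSpace (AddDual K)] [BorelSpace (AddDual K)] (a : K) :
    Measurable (dualEval a) := (dualEval a).continuous.measurable

/-- The characters of `AddDual K`, as a submonoid of the continuous functions. -/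
def dualEvalSubmonoid (K : Type*) [AddCommGroup K] [TopologicalSpace K] :
    Submonoid C(AddDual K, ℂ) where
  carrier := Set.range dualEval
  one_mem' := ⟨0, ContinuousMap.ext dualEval_zero⟩
  mul_mem' := by
    rintro _ _ ⟨a, rfl⟩ ⟨b, rfl⟩
    exact ⟨a + b, ContinuousMap.ext (dualEval_add a b)⟩

theorem star_mem_dualEvalSubmonoid {f : C(AddDual K, ℂ)} (hf : f ∈ dualEvalSubmonoid K) :
    star f ∈ dualEvalSubmonoid K := by
  obtain ⟨a, rfl⟩ := hf
  exact ⟨-a, ContinuousMap.ext (dualEval_neg a)⟩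

variable [DiscreteTopology K]

theorem continuous_dualComp {L : Type*} [AddCommGroup L] [TopologicalSpace L] (f : K →+ L) :
    Continuous (dualComp f : AddDual L → AddDual K) :=
  ContinuousMonoidHom.continuous_comp_left _

@[simp]
theorem dualEval_dualComp {L : Type*} [AddCommGroup L] [TopologicalSpace L] (f : K →+ L) (a : K)
    (η : AddDual L) : dualEval a (dualComp f η) = dualEval (f a) η := rfl

instance [Countable K] : SecondCountableTopology (AddDual K) :=
  have : Countable (Multiplicative K) := ‹_›
  (ContinuousMonoidHom.isEmbedding_toContinuousMap
    (Multiplicative K) Circle).secondCountableTopology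

instance [Countable K] : PolishSpace (AddDual K) :=
  let _ := TopologicalSpace.metrizableSpaceMetric (AddDual K)
  inferInstance

section Countable

variable [Countable K] [MeasurableSpace (AddDual K)] [BorelSpace (AddDual K)]

theorem measure_ext_dualEval {μ ν : Measure (AddDual K)} [IsFiniteMeasure μ] [IsFiniteMeasure ν]
    (h : ∀ a, ∫ ξ, dualEval a ξ ∂μ = ∫ ξ, dualEval a ξ ∂ν) : μ = ν :=
  measure_eq_of_forall_integral_eq (M := dualEvalSubmonoid K)
    (fun _ => star_mem_dualEvalSubmonoid)
    (fun _ _ h => addDual_ext fun a => h _ ⟨a, rfl⟩) (by rintro _ ⟨a, rfl⟩; exact h a)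

theorem measure_prod_ext_dualEval {L : Type*} [AddCommGroup L] [TopologicalSpace L]
    [DiscreteTopology L] [Countable L] [MeasurableSpace (AddDual L)] [BorelSpace (AddDual L)]
    {μ ν : Measure (AddDual K × AddDual L)} [IsFiniteMeasure μ] [IsFiniteMeasure ν]
    (h : ∀ a b, ∫ p, dualEval a p.1 * dualEval b p.2 ∂μ =
      ∫ p, dualEval a p.1 * dualEval b p.2 ∂ν) : μ = ν := by
  let e (a : K) (b : L) : C(AddDual K × AddDual L, ℂ) :=
    (dualEval a).comp .fst * (dualEval b).comp .snd
  let M : Submonoid C(AddDual K × AddDual L, ℂ) :=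
    { carrier := Set.range fun c : K × L => e c.1 c.2
      one_mem' := ⟨0, by ext; simp [e]⟩
      mul_mem' := by
        rintro _ _ ⟨c, rfl⟩ ⟨d, rfl⟩
        refine ⟨c + d, ?_⟩
        ext
        simp [e, dualEval_add, mul_mul_mul_comm] }
  refine measure_eq_of_forall_integral_eq (M := M) ?_ ?_ ?_
  · rintro _ ⟨c, rfl⟩
    refine ⟨-c, ?_⟩
    ext
    simp [e, dualEval_neg]
  · intro p q hpq
    have hpq a b := hpq (e a b) ⟨(a, b), rfl⟩
    exact Prod.ext (addDual_ext fun a => by simpa [e] using hpq a 0)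
      (addDual_ext fun b => by simpa [e] using hpq 0 b)
  · rintro _ ⟨c, rfl⟩
    exact h c.1 c.2

end Countable

theorem exists_injective_addCircle_rat_real :
    ∃ i : AddCircle (1 : ℚ) →+ AddCircle (1 : ℝ), Function.Injective i := by
  let i : AddCircle (1 : ℚ) →+ AddCircle (1 : ℝ) :=
    QuotientAddGroup.map _ _ (Rat.castHom ℝ).toAddMonoidHom (by
      rw [AddSubgroup.zmultiples_le]
      simp)
  refine ⟨i, (injective_iff_map_eq_zero i).2 fun x hx => ?_⟩
  induction x using QuotientAddGroup.induction_on with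
  | H q =>
    obtain ⟨n, hn⟩ : ∃ n : ℤ, n • (1 : ℝ) = q := (AddCircle.coe_eq_zero_iff (1 : ℝ)).1 hx
    refine (AddCircle.coe_eq_zero_iff (1 : ℚ)).2 ⟨n, ?_⟩
    simp only [zsmul_eq_mul, mul_one] at hn ⊢
    exact_mod_cast hn

theorem exists_dualEval_ne_one {a : K} (ha : a ≠ 0) : ∃ ζ : AddDual K, dualEval a ζ ≠ 1 := by
  obtain ⟨c, hc⟩ := CharacterModule.exists_character_apply_ne_zero_of_ne_zero ha
  obtain ⟨i, hi⟩ := exists_injective_addCircle_rat_real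
  let f : Multiplicative K →* Circle :=
    { toFun x := AddCircle.toCircle (i (c x.toAdd))
      map_one' := by simp
      map_mul' x y := by simp [AddCircle.toCircle_add] }
  refine ⟨⟨f, continuous_of_discreteTopology⟩, fun h => hc ?_⟩
  refine (map_eq_zero_iff i hi).1 (AddCircle.injective_toCircle one_ne_zero ?_)
  rw [AddCircle.toCircle_zero]
  exact Subtype.ext h

theorem integral_dualEval_eq_zero [MeasurableSpace (AddDual K)]
    [BorelSpace (AddDual K)] (m : Measure (AddDual K)) [m.IsMulLeftInvariant] {a : K}
    (ha : a ≠ 0) : ∫ ξ, dualEval a ξ ∂m = 0 := by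
  obtain ⟨ζ, hζ⟩ := exists_dualEval_ne_one ha
  have h := integral_mul_left_eq_self (μ := m) (dualEval a) ζ
  simp only [dualEval_mul, integral_const_mul] at h
  have h : (dualEval a ζ - 1) * ∫ ξ, dualEval a ξ ∂m = 0 := by rw [sub_mul, h]; ring
  exact (mul_eq_zero.1 h).resolve_left (sub_ne_zero.2 hζ)

end DualEval

section DualSmul

variable {K : Type*} [Field K] [TopologicalSpace K] [DiscreteTopology K]

@[simp]
theorem dualEval_dualSmul (a b : K) (ξ : AddDual K) :
    dualEval b (dualSmul a ξ) = dualEval (a * b) ξ := rfl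

theorem continuous_dualSmul (a : K) : Continuous (dualSmul a : AddDual K → AddDual K) :=
  continuous_dualComp _

theorem measurable_dualSmul [MeasurableSpace (AddDual K)] [BorelSpace (AddDual K)] (a : K) :
    Measurable (dualSmul a : AddDual K → AddDual K) := (continuous_dualSmul a).measurable

@[simp]
theorem dualSmul_one_left (ξ : AddDual K) : dualSmul 1 ξ = ξ := addDual_ext fun a => by simp

@[simp]
theorem dualSmul_one_right (a : K) : dualSmul a 1 = 1 := addDual_ext fun b => by simp

theorem dualSmul_dualSmul (a b : K) (ξ : AddDual K) :
    dualSmul a (dualSmul b ξ) = dualSmul (a * b) ξ :=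
  addDual_ext fun c => by simp [mul_left_comm, mul_assoc]

theorem dualSmul_injective {a : K} (ha : a ≠ 0) :
    Function.Injective (dualSmul a : AddDual K → AddDual K) := fun ξ ζ h => by
  simpa [dualSmul_dualSmul, inv_mul_cancel₀ ha] using congrArg (dualSmul a⁻¹) h

theorem dualSmul_eq_one_iff {a : K} (ha : a ≠ 0) {ξ : AddDual K} : dualSmul a ξ = 1 ↔ ξ = 1 :=
  (dualSmul_injective ha).eq_iff' (dualSmul_one_right a)

theorem dualSmul_left_injective {ξ : AddDual K} (hξ : ξ ≠ 1) :
    Function.Injective fun a : K => dualSmul a ξ := fun a b hab => by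
  by_contra hne
  have hsub : a - b ≠ 0 := sub_ne_zero.2 hne
  refine hξ (addDual_ext fun c => ?_)
  have hc := congrArg (dualEval ((a - b)⁻¹ * c)) hab
  simp only [dualEval_dualSmul] at hc
  have hsplit : a * ((a - b)⁻¹ * c) = c + b * ((a - b)⁻¹ * c) := by
    field_simp
    ring
  rw [hsplit, dualEval_add] at hc
  have hne0 : dualEval (b * ((a - b)⁻¹ * c)) ξ ≠ 0 := norm_ne_zero_iff.1 (by simp)
  simpa using (mul_eq_right₀ hne0).1 hc

theorem infinite_addDual (K : Type*) [Field K] [Infinite K] [TopologicalSpace K]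
    [DiscreteTopology K] : Infinite (AddDual K) := by
  obtain ⟨ζ, hζ⟩ := exists_dualEval_ne_one (one_ne_zero (α := K))
  have hζ1 : ζ ≠ 1 := by
    rintro rfl
    exact hζ (dualEval_one 1)
  exact .of_injective _ (dualSmul_left_injective hζ1)

instance [Infinite K] : (nhdsWithin (1 : AddDual K) {1}ᶜ).NeBot := by
  by_contra h
  have hopen : IsOpen ({1} : Set (AddDual K)) :=
    (isOpen_singleton_iff_punctured_nhds 1).2 (not_neBot.1 h)
  have := discreteTopology_of_isOpen_singleton_one hopen
  have := infinite_addDual K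
  have := finite_of_compact_of_discrete (X := AddDual K)
  exact not_finite (AddDual K)

variable [MeasurableSpace (AddDual K)] [BorelSpace (AddDual K)]

theorem integral_dualEval_map_dualSmul (σ : Measure (AddDual K)) (a b : K) :
    ∫ ξ, dualEval b ξ ∂σ.map (dualSmul a) = ∫ ξ, dualEval (a * b) ξ ∂σ := by
  rw [integral_map (measurable_dualSmul a).aemeasurable
    (measurable_dualEval b).aestronglyMeasurable]
  simp only [dualEval_dualSmul]

theorem map_dualSmul_eq_self [Countable K] (m : Measure (AddDual K)) [m.IsMulLeftInvariant]
    [IsFiniteMeasure m] {a : K} (ha : a ≠ 0) : m.map (dualSmul a) = m := by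
  refine measure_ext_dualEval fun b => ?_
  rw [integral_dualEval_map_dualSmul]
  rcases eq_or_ne b 0 with rfl | hb
  · simp
  · rw [integral_dualEval_eq_zero m hb, integral_dualEval_eq_zero m (mul_ne_zero ha hb)]

end DualSmul

section Rigidity

section ConstantCoefficients

variable {K : Type*} [AddCommGroup K] [TopologicalSpace K] [DiscreteTopology K] [Countable K]
  [Nontrivial K] [MeasurableSpace (AddDual K)] [BorelSpace (AddDual K)] (m : Measure (AddDual K))
  [m.IsMulLeftInvariant] [IsProbabilityMeasure m] {σ : Measure (AddDual K)} [IsFiniteMeasure σ]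

theorem add_smul_dirac_eq_of_integral_dualEval_eq {τ : ℝ}
    (h : ∀ k ≠ 0, ∫ ξ, dualEval k ξ ∂σ = τ) :
    σ + (-τ).toNNReal • Measure.dirac 1 =
      τ.toNNReal • Measure.dirac 1 + (σ.real Set.univ - τ).toNNReal • m := by
  have hτ_le : τ ≤ σ.real Set.univ := by
    obtain ⟨k, hk⟩ := exists_ne (0 : K)
    rw [← Complex.ofReal_re τ, ← h k hk]
    refine (Complex.re_le_norm _).trans ?_
    simpa using norm_integral_le_of_norm_le_const (μ := σ)
      (.of_forall fun ξ => (norm_dualEval k ξ).le)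
  have hmax : ((max τ 0 : ℝ) : ℂ) - (max (-τ) 0 : ℝ) = τ := by
    rw [← Complex.ofReal_sub, max_zero_sub_max_neg_zero_eq_self]
  refine measure_ext_dualEval fun a => ?_
  have hint (μ : Measure (AddDual K)) [IsFiniteMeasure μ] : Integrable (dualEval a) μ :=
    integrable_continuousMap _ μ
  rw [integral_add_measure (hint _) (hint _), integral_add_measure (hint _) (hint _)]
  simp only [integral_smul_nnreal_measure, integral_dirac, dualEval_one, NNReal.smul_def,
    Real.coe_toNNReal', max_eq_left (sub_nonneg.2 hτ_le), Complex.real_smul, mul_one]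
  rcases eq_or_ne a 0 with rfl | ha
  · simp only [dualEval_zero, integral_const, probReal_univ, Complex.real_smul, mul_one,
      Complex.ofReal_sub, Complex.ofReal_one]
    linear_combination -hmax
  · rw [h a ha, integral_dualEval_eq_zero m ha]
    linear_combination -hmax

theorem eq_measureReal_singleton_of_integral_dualEval_eq [NullSingletonClass m] {τ : ℂ}
    (h : ∀ k ≠ 0, ∫ ξ, dualEval k ξ ∂σ = τ) : τ = σ.real {1} := by
  have hτ : (τ.re : ℂ) = τ := by
    obtain ⟨k, hk⟩ := exists_ne (0 : K)
    rw [← Complex.conj_eq_iff_re]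
    nth_rw 1 [← h k hk, ← integral_conj]
    simp_rw [starRingEnd_apply, ← dualEval_neg]
    exact h _ (neg_ne_zero.2 hk)
  have hatom : (σ + (-τ.re).toNNReal • Measure.dirac 1).real {1} = (τ.re.toNNReal •
      Measure.dirac 1 + (σ.real Set.univ - τ.re).toNNReal • m).real {1} := by
    rw [add_smul_dirac_eq_of_integral_dualEval_eq m (by rwa [hτ])]
  have hdirac : (Measure.dirac (1 : AddDual K)).real {1} = 1 := by simp [measureReal_def]
  have hm : m.real {1} = 0 := by simp [measureReal_def]
  rw [measureReal_add_apply, measureReal_add_apply] at hatom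
  simp only [measureReal_nnreal_smul_apply, hdirac, hm, mul_one, mul_zero, add_zero,
    Real.coe_toNNReal'] at hatom
  rw [← hτ, Complex.ofReal_inj, ← max_zero_sub_max_neg_zero_eq_self τ.re, ← hatom,
    add_sub_cancel_right]

end ConstantCoefficients

theorem integral_dualEval_map_div {K : Type*} [AddCommGroup K] [TopologicalSpace K]
    [DiscreteTopology K] [Countable K] [MeasurableSpace (AddDual K)] [BorelSpace (AddDual K)]
    (σ : Measure (AddDual K)) [IsFiniteMeasure σ] (k : K) :
    ∫ ξ, dualEval k ξ ∂(σ.prod σ).map (fun p => p.1 * p.2⁻¹) =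
      (‖∫ ξ, dualEval k ξ ∂σ‖ ^ 2 : ℝ) := by
  rw [integral_map (by fun_prop) (measurable_dualEval k).aestronglyMeasurable]
  simp only [dualEval_mul, dualEval_inv]
  rw [integral_prod_mul (dualEval k) fun ζ => star (dualEval k ζ)]
  simp only [← starRingEnd_apply]
  rw [integral_conj, Complex.mul_conj']
  norm_cast

theorem map_div_singleton_one_eq_zero {G : Type*} [Group G] [MeasurableSpace G]
    [MeasurableSingletonClass G] [MeasurableMul₂ G] [MeasurableInv G] {σ : Measure G} [SFinite σ]
    (hσ : ∀ x, σ {x} = 0) : (σ.prod σ).map (fun p => p.1 * p.2⁻¹) {1} = 0 := by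
  have hmeas : Measurable fun p : G × G => p.1 * p.2⁻¹ := by fun_prop
  have hpreimage (x : G) : Prod.mk x ⁻¹' ((fun p : G × G => p.1 * p.2⁻¹) ⁻¹' {1}) = {x} := by
    ext y
    simp [mul_inv_eq_one, eq_comm]
  rw [Measure.map_apply hmeas (.singleton 1), Measure.measure_prod_null (hmeas (.singleton 1))]
  filter_upwards with x
  rw [hpreimage, hσ, Pi.zero_apply]

theorem sum_quotient_out_mul {G E : Type*} [CommGroup G] [AddCommMonoid E] {H : Subgroup G}
    [Fintype (G ⧸ H)] {f : G → E} (hf : ∀ x, ∀ h ∈ H, f (x * h) = f x) (k : G) :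
    ∑ g : G ⧸ H, f (g.out * k) = ∑ g : G ⧸ H, f g.out := by
  refine Fintype.sum_equiv (Equiv.mulRight (k : G ⧸ H)) _ _ fun g => ?_
  obtain ⟨h, hh⟩ := QuotientGroup.mk_out_eq_mul H (g.out * k)
  rw [QuotientGroup.mk_mul, QuotientGroup.out_eq'] at hh
  rw [Equiv.coe_mulRight, hh, hf _ _ h.2]

theorem infinite_subgroup_units {K : Type*} [Field K] [Infinite K] (H : Subgroup Kˣ)
    [H.FiniteIndex] : Infinite H := by
  by_contra h
  have : Finite H := not_infinite_iff_finite.1 h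
  have : Finite Kˣ := .of_equiv _ H.groupEquivQuotientProdSubgroup.symm
  classical
  have : Finite K := Finite.of_equiv (Option Kˣ) WithZero.withZeroUnitsEquiv.toEquiv
  exact not_finite K

variable {K : Type*} [Field K] [TopologicalSpace K] [DiscreteTopology K] [Countable K]
  [Infinite K] [MeasurableSpace (AddDual K)] [BorelSpace (AddDual K)] {σ : Measure (AddDual K)}
  [IsFiniteMeasure σ] {H : Subgroup Kˣ} [H.FiniteIndex]

theorem measure_singleton_eq_zero_of_map_dualSmul
    (hσ : ∀ a ∈ H, σ.map (dualSmul (a : K)) = σ) (h1 : σ {1} = 0) (ξ : AddDual K) :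
    σ {ξ} = 0 := by
  rcases eq_or_ne ξ 1 with rfl | hξ
  · exact h1
  by_contra hne
  have := infinite_subgroup_units H
  have horbit : (Set.range fun a : H => dualSmul (a.1 : K) ξ).Infinite :=
    Set.infinite_range_of_injective fun a b hab =>
      Subtype.ext (Units.ext (dualSmul_left_injective hξ hab))
  refine measure_ne_top σ _ (horbit.meas_eq_top ⟨σ {ξ}, hne, ?_⟩)
  rintro _ ⟨a, rfl⟩
  conv_rhs => rw [← hσ a a.2, Measure.map_apply (measurable_dualSmul _) (.singleton _)]
  exact measure_mono (by simp)

theorem integral_dualEval_eq_zero_of_map_dualSmul (m : Measure (AddDual K)) [m.IsHaarMeasure]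
    [IsProbabilityMeasure m] (hσ : ∀ a ∈ H, σ.map (dualSmul (a : K)) = σ) (h1 : σ {1} = 0)
    {k : K} (hk : k ≠ 0) : ∫ ξ, dualEval k ξ ∂σ = 0 := by
  let δ : Measure (AddDual K) := (σ.prod σ).map fun p => p.1 * p.2⁻¹
  have hδ1 : δ {1} = 0 :=
    map_div_singleton_one_eq_zero (measure_singleton_eq_zero_of_map_dualSmul hσ h1)
  let f (x : Kˣ) : ℝ := ‖∫ ξ, dualEval (x : K) ξ ∂σ‖ ^ 2
  have hf (x a : Kˣ) (ha : a ∈ H) : f (x * a) = f x := by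
    simp only [f, Units.val_mul, mul_comm (x : K), ← integral_dualEval_map_dualSmul, hσ a ha]
  let _ := Fintype.ofFinite (Kˣ ⧸ H)
  let Δ : Measure (AddDual K) := ∑ g : Kˣ ⧸ H, δ.map (dualSmul ((g.out : Kˣ) : K))
  have hΔ (k : K) (hk : k ≠ 0) : ∫ ξ, dualEval k ξ ∂Δ = (∑ g : Kˣ ⧸ H, f g.out : ℝ) := by
    rw [integral_finsetSum_measure fun g _ => integrable_continuousMap _ _,
      ← sum_quotient_out_mul hf (Units.mk0 k hk), Complex.ofReal_sum]
    refine Finset.sum_congr rfl fun g _ => ?_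
    rw [integral_dualEval_map_dualSmul, integral_dualEval_map_div]
    simp [f]
  have hΔ1 : Δ.real {1} = 0 := by
    have hpreimage (a : Kˣ) : dualSmul (a : K) ⁻¹' {1} = {1} := by
      ext ξ
      exact dualSmul_eq_one_iff a.ne_zero
    simp [Δ, measureReal_def, Measure.map_apply (measurable_dualSmul _), hpreimage, hδ1]
  have hsum : ∑ g : Kˣ ⧸ H, f (g.out * Units.mk0 k hk) = 0 := by
    rw [sum_quotient_out_mul hf, ← Complex.ofReal_inj,
      eq_measureReal_singleton_of_integral_dualEval_eq m hΔ, hΔ1]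
  have hterm := (Finset.sum_eq_zero_iff_of_nonneg fun _ _ => by positivity).1 hsum 1
    (Finset.mem_univ _)
  have hout : (1 : Kˣ ⧸ H).out ∈ H := (QuotientGroup.eq_one_iff _).1 (QuotientGroup.out_eq' _)
  rw [mul_comm, hf _ _ hout] at hterm
  simpa [f] using hterm

theorem integral_dualEval_eq_of_map_dualSmul (m : Measure (AddDual K)) [m.IsHaarMeasure]
    [IsProbabilityMeasure m] (hσ : ∀ a ∈ H, σ.map (dualSmul (a : K)) = σ) {k : K} (hk : k ≠ 0) :
    ∫ ξ, dualEval k ξ ∂σ = σ.real {1} := by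
  have hinv : ∀ a ∈ H, (σ.restrict {1}ᶜ).map (dualSmul (a : K)) = σ.restrict {1}ᶜ := by
    intro a ha
    have hpreimage : dualSmul (a : K) ⁻¹' {1}ᶜ = {1}ᶜ := by
      ext ξ
      simp [dualSmul_eq_one_iff a.ne_zero]
    conv_rhs => rw [← hσ a ha, Measure.restrict_map (measurable_dualSmul _)
      (measurableSet_singleton 1).compl, hpreimage]
  rw [← integral_add_compl (measurableSet_singleton 1) (integrable_continuousMap _ _),
    integral_dualEval_eq_zero_of_map_dualSmul m hinv (by simp) hk]
  simp [measureReal_def]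

end Rigidity

section InvariantCoupling

variable {K L : Type*} [Field K] [Field L] [TopologicalSpace K] [DiscreteTopology K]
  [TopologicalSpace L] [DiscreteTopology L] [MeasurableSpace (AddDual K)]
  [MeasurableSpace (AddDual L)]

/-- `θ` is a coupling of `mK` and `mL` invariant under the diagonal action of `Kˣ`, which acts on
the dual of `L` via `ρ`. -/
structure IsInvariantCoupling (mK : Measure (AddDual K)) (mL : Measure (AddDual L))
    (ρ : Kˣ ≃* Lˣ) (θ : Measure (AddDual K × AddDual L)) : Prop where
  map_fst : θ.map Prod.fst = mK
  map_snd : θ.map Prod.snd = mL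
  map_smul : ∀ a : Kˣ, θ.map (Prod.map (dualSmul (a : K)) (dualSmul (ρ a : L))) = θ

namespace IsInvariantCoupling

variable {mK : Measure (AddDual K)} {mL : Measure (AddDual L)} {ρ : Kˣ ≃* Lˣ}
  {θ : Measure (AddDual K × AddDual L)}

theorem isProbabilityMeasure (hθ : IsInvariantCoupling mK mL ρ θ) [IsProbabilityMeasure mL] :
    IsProbabilityMeasure θ := by
  have : IsProbabilityMeasure (θ.map Prod.snd) := by rwa [hθ.map_snd]
  exact Measure.isProbabilityMeasure_of_map Prod.snd

theorem integral_dualEval_fst [BorelSpace (AddDual K)] (hθ : IsInvariantCoupling mK mL ρ θ)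
    (a : K) : ∫ p, dualEval a p.1 ∂θ = ∫ ξ, dualEval a ξ ∂mK := by
  rw [← hθ.map_fst, integral_map (by fun_prop) (measurable_dualEval a).aestronglyMeasurable]

theorem integral_dualEval_snd [BorelSpace (AddDual L)] (hθ : IsInvariantCoupling mK mL ρ θ)
    (b : L) : ∫ p, dualEval b p.2 ∂θ = ∫ η, dualEval b η ∂mL := by
  rw [← hθ.map_snd, integral_map (by fun_prop) (measurable_dualEval b).aestronglyMeasurable]

theorem measure_preimage_snd_singleton_one [BorelSpace (AddDual L)] [NullSingletonClass mL]
    (hθ : IsInvariantCoupling mK mL ρ θ) : θ (Prod.snd ⁻¹' {1}) = 0 := by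
  rw [← Measure.map_apply measurable_snd (measurableSet_singleton 1), hθ.map_snd,
    measure_singleton]

variable [BorelSpace (AddDual K)] [BorelSpace (AddDual L)]

theorem integral_dualEval_mul (hθ : IsInvariantCoupling mK mL ρ θ) (x : Kˣ) (a : K) (b : L) :
    ∫ p, dualEval (x * a) p.1 * dualEval (ρ x * b) p.2 ∂θ =
      ∫ p, dualEval a p.1 * dualEval b p.2 ∂θ := by
  conv_rhs => rw [← hθ.map_smul x]
  rw [integral_map ((measurable_dualSmul _).prodMap (measurable_dualSmul _)).aemeasurable]
  · simp
  · exact (((measurable_dualEval a).comp measurable_fst).mul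
      ((measurable_dualEval b).comp measurable_snd)).aestronglyMeasurable

theorem exists_integral_dualEval_ne_zero [Countable K] [Countable L] [mK.IsMulLeftInvariant]
    [mL.IsMulLeftInvariant] [IsProbabilityMeasure mK] [IsProbabilityMeasure mL]
    (hθ : IsInvariantCoupling mK mL ρ θ) (hne : θ ≠ mK.prod mL) :
    ∃ b : Lˣ, ∫ p, dualEval 1 p.1 * dualEval (b : L) p.2 ∂θ ≠ 0 := by
  by_contra! h
  have := hθ.isProbabilityMeasure
  refine hne (measure_prod_ext_dualEval fun a b => ?_)
  rw [integral_prod_mul (dualEval a) (dualEval b)]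
  rcases eq_or_ne a 0 with rfl | ha
  · simp [hθ.integral_dualEval_snd]
  rcases eq_or_ne b 0 with rfl | hb
  · simp [hθ.integral_dualEval_fst]
  have hcoeff := hθ.integral_dualEval_mul (Units.mk0 a ha) 1 ((ρ (Units.mk0 a ha))⁻¹ *
    Units.mk0 b hb : Lˣ)
  rw [h] at hcoeff
  simpa [integral_dualEval_eq_zero mK ha] using hcoeff

end IsInvariantCoupling

end InvariantCoupling

section Kernel

open ProbabilityTheory

theorem ae_map_eq_of_map_compProd_eq {X Y : Type*} [MeasurableSpace X] [MeasurableSpace Y]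
    [MeasurableSpace.CountableOrCountablyGenerated Y X] {μ : Measure Y} [IsFiniteMeasure μ]
    {q : Kernel Y X} [IsFiniteKernel q] {g : Y → Y} {f : X → X} (hg : MeasurePreserving g μ μ)
    (hge : MeasurableEmbedding g) (hf : Measurable f)
    (h : (μ ⊗ₘ q).map (Prod.map g f) = μ ⊗ₘ q) : ∀ᵐ y ∂μ, (q y).map f = q (g y) := by
  suffices heq : μ ⊗ₘ q.map f = μ ⊗ₘ q.comap g hg.measurable by
    filter_upwards [Kernel.ae_eq_of_compProd_eq heq] with y hy
    rw [← Kernel.map_apply q hf, hy, Kernel.comap_apply]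
  refine Measure.ext_prod_iff.2 fun {s t} hs ht => ?_
  have hpreimage : Prod.map g f ⁻¹' ((g '' s) ×ˢ t) = s ×ˢ (f ⁻¹' t) := by
    ext p
    simp [hge.injective.mem_set_image]
  have himage : MeasurableSet (g '' s) := hge.measurableSet_image.2 hs
  calc
    (μ ⊗ₘ q.map f) (s ×ˢ t) = (μ ⊗ₘ q) (s ×ˢ (f ⁻¹' t)) := by
      simp only [Measure.compProd_apply_prod hs ht, Measure.compProd_apply_prod hs (hf ht),
        Kernel.map_apply' q hf _ ht]
    _ = (μ ⊗ₘ q) ((g '' s) ×ˢ t) := by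
      rw [← hpreimage, ← Measure.map_apply (hg.measurable.prodMap hf) (himage.prod ht), h]
    _ = (μ ⊗ₘ q.comap g hg.measurable) (s ×ˢ t) := by
      rw [Measure.compProd_apply_prod himage ht, Measure.compProd_apply_prod hs ht,
        ← hg.setLIntegral_comp_emb hge]
      simp only [Kernel.comap_apply]

theorem compProd_diagonal_ne_zero {X Y : Type*} [Group X] [MeasurableSpace X]
    [MeasurableSingletonClass X] [MeasurableMul₂ X] [MeasurableInv X] [MeasurableEq X]
    [MeasurableSpace Y] (q : Kernel Y X) [IsMarkovKernel q] (μ : Measure Y) [IsFiniteMeasure μ]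
    (h : (μ ⊗ₘ (q ×ₖ q)).map (fun p => p.2.1 * p.2.2⁻¹) {1} ≠ 0) :
    (μ ⊗ₘ (q ×ₖ (q ×ₖ q))) {p | p.2.1 = p.2.2.1 ∧ p.2.1 = p.2.2.2} ≠ 0 := by
  contrapose h
  have hmeas : Measurable fun p : Y × X × X => p.2.1 * p.2.2⁻¹ := by fun_prop
  have hD : MeasurableSet {p : Y × X × X × X | p.2.1 = p.2.2.1 ∧ p.2.1 = p.2.2.2} :=
    (measurableSet_eq_fun (by fun_prop) (by fun_prop)).inter
      (measurableSet_eq_fun (by fun_prop) (by fun_prop))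
  rw [Measure.compProd_apply hD,
    lintegral_eq_zero_iff (Kernel.measurable_kernel_prodMk_left hD)] at h
  rw [Measure.map_apply hmeas (.singleton 1), Measure.compProd_apply (hmeas (.singleton 1)),
    lintegral_eq_zero_iff (Kernel.measurable_kernel_prodMk_left (hmeas (.singleton 1)))]
  filter_upwards [h] with y hy
  have hatom (x : X) : q y {x} = 0 := by
    have hcube : ({x} : Set X) ×ˢ ({x} : Set X) ×ˢ ({x} : Set X) ⊆
        Prod.mk y ⁻¹' {p | p.2.1 = p.2.2.1 ∧ p.2.1 = p.2.2.2} := by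
      rintro ⟨a, b, c⟩ ⟨ha, hb, hc⟩
      exact ⟨ha.trans hb.symm, ha.trans hc.symm⟩
    simpa [Kernel.prod_apply, -Set.singleton_prod_singleton] using measure_mono_null hcube hy
  have hdiv := map_div_singleton_one_eq_zero hatom
  rwa [Measure.map_apply (by fun_prop) (.singleton 1), ← Kernel.prod_apply] at hdiv

section FiberCoeff

variable {K Y : Type*} [AddCommGroup K] [TopologicalSpace K] [MeasurableSpace (AddDual K)]
  [MeasurableSpace Y]

/-- The Fourier coefficient at `k` of the fibre measures of a kernel `q` into `AddDual K`. -/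
def fiberCoeff (q : Kernel Y (AddDual K)) (k : K) (y : Y) : ℂ := ∫ ξ, dualEval k ξ ∂q y

variable (q : Kernel Y (AddDual K))

theorem stronglyMeasurable_fiberCoeff [BorelSpace (AddDual K)] (k : K) :
    StronglyMeasurable (fiberCoeff q k) :=
  StronglyMeasurable.integral_kernel (measurable_dualEval k).stronglyMeasurable

theorem norm_fiberCoeff_le [IsMarkovKernel q] (k : K) (y : Y) : ‖fiberCoeff q k y‖ ≤ 1 := by
  simpa [fiberCoeff] using norm_integral_le_of_norm_le_const (μ := q y)
    (.of_forall fun ξ => (norm_dualEval k ξ).le)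

variable [IsMarkovKernel q] [BorelSpace (AddDual K)]

theorem integral_dualEval_map_div_compProd [DiscreteTopology K] [Countable K] (μ : Measure Y)
    [IsFiniteMeasure μ] (k : K) :
    ∫ ξ, dualEval k ξ ∂(μ ⊗ₘ (q ×ₖ q)).map (fun p => p.2.1 * p.2.2⁻¹) =
      (∫ y, ‖fiberCoeff q k y‖ ^ 2 ∂μ : ℝ) := by
  have hmeas : Measurable fun p : Y × AddDual K × AddDual K => p.2.1 * p.2.2⁻¹ := by fun_prop
  rw [integral_map hmeas.aemeasurable (measurable_dualEval k).aestronglyMeasurable,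
    Measure.integral_compProd, ← integral_complex_ofReal]
  · refine integral_congr_ae (.of_forall fun y => ?_)
    simp only [fiberCoeff]
    rw [← integral_dualEval_map_div, integral_map (by fun_prop)
      (measurable_dualEval k).aestronglyMeasurable, Kernel.prod_apply]
  · exact .of_bound ((measurable_dualEval k).comp hmeas).aestronglyMeasurable 1
      (.of_forall fun p => by simp)

end FiberCoeff

section Equivariant

variable {K Y : Type*} [Field K] [TopologicalSpace K] [DiscreteTopology K]
  [MeasurableSpace (AddDual K)] [BorelSpace (AddDual K)] [MeasurableSpace Y]

theorem integral_dualEval_map_triple_compProd [Countable K] (q : Kernel Y (AddDual K))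
    [IsMarkovKernel q] (μ : Measure Y) [IsFiniteMeasure μ] (a a' a'' k : K) :
    ∫ ξ, dualEval k ξ ∂(μ ⊗ₘ (q ×ₖ (q ×ₖ q))).map (fun p => dualSmul a p.2.1 *
        (dualSmul a' p.2.2.1 * (dualSmul a'' p.2.2.2)⁻¹)) =
      ∫ y, fiberCoeff q (a * k) y * (fiberCoeff q (a' * k) y *
        star (fiberCoeff q (a'' * k) y)) ∂μ := by
  have hmeas : Measurable fun p : Y × AddDual K × AddDual K × AddDual K => dualSmul a p.2.1 *
      (dualSmul a' p.2.2.1 * (dualSmul a'' p.2.2.2)⁻¹) := by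
    have h := @measurable_dualSmul K
    fun_prop
  rw [integral_map hmeas.aemeasurable (measurable_dualEval k).aestronglyMeasurable,
    Measure.integral_compProd]
  · refine integral_congr_ae (.of_forall fun y => ?_)
    simp only [dualEval_mul, dualEval_inv, dualEval_dualSmul, Kernel.prod_apply]
    rw [integral_prod_mul (dualEval (a * k)) fun p : AddDual K × AddDual K =>
        dualEval (a' * k) p.1 * star (dualEval (a'' * k) p.2),
      integral_prod_mul (dualEval (a' * k)) fun ξ => star (dualEval (a'' * k) ξ)]
    simp only [← starRingEnd_apply, integral_conj, fiberCoeff]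
  · exact .of_bound ((measurable_dualEval k).comp hmeas).aestronglyMeasurable 1
      (.of_forall fun p => by simp)

theorem compProd_measureReal_diagonal_le (q : Kernel Y (AddDual K)) [IsMarkovKernel q]
    (μ : Measure Y) [IsFiniteMeasure μ] [Countable K] {a a' a'' : K} (hsum : a + a' = a'') :
    (μ ⊗ₘ (q ×ₖ (q ×ₖ q))).real {p | p.2.1 = p.2.2.1 ∧ p.2.1 = p.2.2.2} ≤
      ((μ ⊗ₘ (q ×ₖ (q ×ₖ q))).map (fun p => dualSmul a p.2.1 *
        (dualSmul a' p.2.2.1 * (dualSmul a'' p.2.2.2)⁻¹))).real {1} := by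
  have hmeas : Measurable fun p : Y × AddDual K × AddDual K × AddDual K =>
      dualSmul a p.2.1 * (dualSmul a' p.2.2.1 * (dualSmul a'' p.2.2.2)⁻¹) := by
    have h := @measurable_dualSmul K
    fun_prop
  rw [map_measureReal_apply hmeas (.singleton 1)]
  refine measureReal_mono ?_
  rintro ⟨y, ξ, ξ', ξ''⟩ ⟨h', h''⟩
  obtain rfl : ξ = ξ' := h'
  obtain rfl : ξ = ξ'' := h''
  have hadd : dualSmul a ξ * dualSmul a' ξ = dualSmul a'' ξ :=
    addDual_ext fun k => by simp [dualEval_mul, ← dualEval_add, ← hsum, add_mul]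
  simp [← mul_assoc, hadd]

variable {q : Kernel Y (AddDual K)} {μ : Measure Y} {T : Kˣ → Y → Y}

theorem ae_fiberCoeff_mul (hq : ∀ k : Kˣ, ∀ᵐ y ∂μ, (q y).map (dualSmul (k : K)) = q (T k y))
    (k : Kˣ) : ∀ᵐ y ∂μ, ∀ a : K, fiberCoeff q (k * a) y = fiberCoeff q a (T k y) := by
  filter_upwards [hq k] with y hy a
  rw [fiberCoeff, fiberCoeff, ← hy, integral_dualEval_map_dualSmul]

variable [Countable K] [Infinite K] [IsMarkovKernel q] [IsFiniteMeasure μ]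

theorem compProd_map_div_singleton_one_ne_zero (m : Measure (AddDual K))
    [m.IsHaarMeasure] [IsProbabilityMeasure m] (hT : ∀ k, MeasurePreserving (T k) μ μ)
    (hq : ∀ k : Kˣ, ∀ᵐ y ∂μ, (q y).map (dualSmul (k : K)) = q (T k y))
    (hne : ¬ fiberCoeff q 1 =ᵐ[μ] 0) :
    (μ ⊗ₘ (q ×ₖ q)).map (fun p => p.2.1 * p.2.2⁻¹) {1} ≠ 0 := by
  intro hzero
  have hmeas : AEStronglyMeasurable (fun y => ‖fiberCoeff q 1 y‖ ^ 2) μ :=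
    ((stronglyMeasurable_fiberCoeff q 1).norm.pow 2).aestronglyMeasurable
  have hconst (k : K) (hk : k ≠ 0) : ∫ ξ, dualEval k ξ ∂(μ ⊗ₘ (q ×ₖ q)).map
      (fun p => p.2.1 * p.2.2⁻¹) = (∫ y, ‖fiberCoeff q 1 y‖ ^ 2 ∂μ : ℝ) := by
    have hT' := hT (Units.mk0 k hk)
    have hcomp := integral_map (f := fun y => ‖fiberCoeff q 1 y‖ ^ 2) hT'.aemeasurable
      (hT'.map_eq.symm ▸ hmeas)
    rw [hT'.map_eq] at hcomp
    rw [integral_dualEval_map_div_compProd, hcomp]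
    congr 1
    refine integral_congr_ae ?_
    filter_upwards [ae_fiberCoeff_mul hq (Units.mk0 k hk)] with y hy
    rw [← hy 1, Units.val_mk0, mul_one]
  have hint : ∫ y, ‖fiberCoeff q 1 y‖ ^ 2 ∂μ = 0 := by
    rw [← Complex.ofReal_inj, eq_measureReal_singleton_of_integral_dualEval_eq m hconst]
    simp [measureReal_def, hzero]
  have hintegrable : Integrable (fun y => ‖fiberCoeff q 1 y‖ ^ 2) μ :=
    .of_bound hmeas 1 (.of_forall fun y => by
      simpa using norm_fiberCoeff_le q 1 y)
  rw [integral_eq_zero_iff_of_nonneg (fun y => by positivity) hintegrable] at hint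
  refine hne ?_
  filter_upwards [hint] with y hy
  simpa using hy

theorem measureReal_diagonal_le_norm_integral_fiberCoeff (m : Measure (AddDual K))
    [m.IsHaarMeasure] [IsProbabilityMeasure m] (hT : ∀ k, MeasurePreserving (T k) μ μ)
    (hq : ∀ k : Kˣ, ∀ᵐ y ∂μ, (q y).map (dualSmul (k : K)) = q (T k y)) {a a' a'' : Kˣ}
    (hsum : (a : K) + a' = a'') :
    (μ ⊗ₘ (q ×ₖ (q ×ₖ q))).real {p | p.2.1 = p.2.2.1 ∧ p.2.1 = p.2.2.2} ≤
      ‖∫ y, fiberCoeff q 1 (T a y) *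
        (fiberCoeff q 1 (T a' y) * star (fiberCoeff q 1 (T a'' y))) ∂μ‖ := by
  set F : Y → ℂ := fun y => fiberCoeff q a y * (fiberCoeff q a' y * star (fiberCoeff q a'' y))
    with hF
  have hFmeas : AEStronglyMeasurable F μ :=
    ((stronglyMeasurable_fiberCoeff q _).mul ((stronglyMeasurable_fiberCoeff q _).mul
      (stronglyMeasurable_fiberCoeff q _).star)).aestronglyMeasurable
  have hFint : ∫ y, fiberCoeff q 1 (T a y) *
      (fiberCoeff q 1 (T a' y) * star (fiberCoeff q 1 (T a'' y))) ∂μ = ∫ y, F y ∂μ := by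
    refine integral_congr_ae ?_
    filter_upwards [ae_fiberCoeff_mul hq a, ae_fiberCoeff_mul hq a', ae_fiberCoeff_mul hq a'']
      with y h h' h''
    simp only [hF, ← h 1, ← h' 1, ← h'' 1, mul_one]
  have hconst (k : K) (hk : k ≠ 0) : ∫ ξ, dualEval k ξ ∂(μ ⊗ₘ (q ×ₖ (q ×ₖ q))).map
      (fun p => dualSmul (a : K) p.2.1 *
        (dualSmul (a' : K) p.2.2.1 * (dualSmul (a'' : K) p.2.2.2)⁻¹)) = ∫ y, F y ∂μ := by
    have hT' := hT (Units.mk0 k hk)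
    have hcomp := integral_map (f := F) hT'.aemeasurable (hT'.map_eq.symm ▸ hFmeas)
    rw [hT'.map_eq] at hcomp
    rw [integral_dualEval_map_triple_compProd, hcomp]
    refine integral_congr_ae ?_
    filter_upwards [ae_fiberCoeff_mul hq (Units.mk0 k hk)] with y hy
    simp only [hF, ← hy, Units.val_mk0, mul_comm k]
  rw [hFint, eq_measureReal_singleton_of_integral_dualEval_eq m hconst, Complex.norm_real,
    Real.norm_of_nonneg measureReal_nonneg]
  exact compProd_measureReal_diagonal_le q μ hsum

theorem exists_pos_le_norm_integral_fiberCoeff (m : Measure (AddDual K))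
    [m.IsHaarMeasure] [IsProbabilityMeasure m] (hT : ∀ k, MeasurePreserving (T k) μ μ)
    (hq : ∀ k : Kˣ, ∀ᵐ y ∂μ, (q y).map (dualSmul (k : K)) = q (T k y))
    (hne : ¬ fiberCoeff q 1 =ᵐ[μ] 0) :
    ∃ δ > 0, ∀ a a' a'' : Kˣ, (a : K) + a' = a'' → δ ≤ ‖∫ y, fiberCoeff q 1 (T a y) *
      (fiberCoeff q 1 (T a' y) * star (fiberCoeff q 1 (T a'' y))) ∂μ‖ :=
  ⟨_, ENNReal.toReal_pos (compProd_diagonal_ne_zero q μ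
    (compProd_map_div_singleton_one_ne_zero m hT hq hne)) (measure_ne_top _ _),
    fun _ _ _ => measureReal_diagonal_le_norm_integral_fiberCoeff m hT hq⟩

end Equivariant

end Kernel

section TripleCorrelation

theorem norm_integral_mul_mul_sub_le {X : Type*} [MeasurableSpace X] {μ : Measure X}
    {u₁ u₂ u₃ p₁ p₂ p₃ : X → ℂ} {C₁ C₂ : ℝ} (hu₁ : Integrable u₁ μ)
    (hu₂ : Integrable u₂ μ) (hu₃ : Integrable u₃ μ) (hp₁ : Integrable p₁ μ)
    (hp₂ : Integrable p₂ μ) (hp₃ : Integrable p₃ μ) (hu₂_le : ∀ x, ‖u₂ x‖ ≤ 1)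
    (hu₃_le : ∀ x, ‖u₃ x‖ ≤ 1) (hp₁_le : ∀ x, ‖p₁ x‖ ≤ C₁) (hp₂_le : ∀ x, ‖p₂ x‖ ≤ C₂) :
    ‖∫ x, u₁ x * (u₂ x * u₃ x) ∂μ - ∫ x, p₁ x * (p₂ x * p₃ x) ∂μ‖ ≤
      ∫ x, ‖u₁ x - p₁ x‖ ∂μ + C₁ * ∫ x, ‖u₂ x - p₂ x‖ ∂μ +
        C₁ * C₂ * ∫ x, ‖u₃ x - p₃ x‖ ∂μ := by
  have hu : Integrable (fun x => u₁ x * (u₂ x * u₃ x)) μ :=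
    hu₁.mul_bdd (hu₂.1.mul hu₃.1) (.of_forall fun x => by
      simpa using mul_le_one₀ (hu₂_le x) (norm_nonneg _) (hu₃_le x))
  have hp : Integrable (fun x => p₁ x * (p₂ x * p₃ x)) μ :=
    (hp₃.bdd_mul hp₂.1 (.of_forall hp₂_le)).bdd_mul hp₁.1 (.of_forall hp₁_le)
  have h₁ : Integrable (fun x => ‖u₁ x - p₁ x‖) μ := (hu₁.sub hp₁).norm
  have h₂ : Integrable (fun x => C₁ * ‖u₂ x - p₂ x‖) μ := (hu₂.sub hp₂).norm.const_mul C₁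
  have h₃ : Integrable (fun x => C₁ * C₂ * ‖u₃ x - p₃ x‖) μ :=
    (hu₃.sub hp₃).norm.const_mul (C₁ * C₂)
  rw [← integral_sub hu hp, ← integral_const_mul, ← integral_const_mul]
  refine (norm_integral_le_integral_norm _).trans ?_
  rw [← integral_add h₁ h₂, ← integral_add (f := fun x => _ + _) (h₁.add h₂) h₃]
  refine integral_mono (hu.sub hp).norm ((h₁.add h₂).add h₃) fun x => ?_
  have hC₁ : 0 ≤ C₁ := (norm_nonneg _).trans (hp₁_le x)
  calc ‖u₁ x * (u₂ x * u₃ x) - p₁ x * (p₂ x * p₃ x)‖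
      = ‖(u₁ x - p₁ x) * (u₂ x * u₃ x) + p₁ x * ((u₂ x - p₂ x) * u₃ x) +
          p₁ x * p₂ x * (u₃ x - p₃ x)‖ := by ring_nf
    _ ≤ ‖u₁ x - p₁ x‖ * (‖u₂ x‖ * ‖u₃ x‖) + ‖p₁ x‖ * (‖u₂ x - p₂ x‖ * ‖u₃ x‖) +
          ‖p₁ x‖ * ‖p₂ x‖ * ‖u₃ x - p₃ x‖ := by
        exact norm_add₃_le.trans_eq (by simp only [norm_mul])
    _ ≤ ‖u₁ x - p₁ x‖ * (1 * 1) + C₁ * (‖u₂ x - p₂ x‖ * 1) + C₁ * C₂ * ‖u₃ x - p₃ x‖ := by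
        gcongr <;> first | exact hu₂_le x | exact hu₃_le x | exact hp₁_le x | exact hp₂_le x
    _ = ‖u₁ x - p₁ x‖ + C₁ * ‖u₂ x - p₂ x‖ + C₁ * C₂ * ‖u₃ x - p₃ x‖ := by ring

open scoped Pointwise

section Span

variable {L : Type*} [AddCommGroup L] [TopologicalSpace L] {S T : Set L}
  {p q : C(AddDual L, ℂ)}

theorem mul_mem_span_dualEval (hp : p ∈ Submodule.span ℂ (dualEval '' S))
    (hq : q ∈ Submodule.span ℂ (dualEval '' T)) :
    p * q ∈ Submodule.span ℂ (dualEval '' (S + T)) := by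
  have hpq := Submodule.mul_mem_mul hp hq
  rw [Submodule.span_mul_span] at hpq
  refine Submodule.span_mono ?_ hpq
  rintro _ ⟨_, ⟨a, ha, rfl⟩, _, ⟨b, hb, rfl⟩, rfl⟩
  exact ⟨a + b, Set.add_mem_add ha hb, ContinuousMap.ext (dualEval_add a b)⟩

theorem star_mem_span_dualEval (hp : p ∈ Submodule.span ℂ (dualEval '' S)) :
    star p ∈ Submodule.span ℂ (dualEval '' (-S)) := by
  induction hp using Submodule.span_induction with
  | mem f hf =>
    obtain ⟨a, ha, rfl⟩ := hf
    exact Submodule.subset_span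
      ⟨-a, Set.neg_mem_neg.2 ha, ContinuousMap.ext (dualEval_neg a)⟩
  | zero => simp
  | add p q _ _ hp hq => simpa only [star_add] using add_mem hp hq
  | smul c p _ hp => simpa only [star_smul] using Submodule.smul_mem _ _ hp

variable [DiscreteTopology L] [MeasurableSpace (AddDual L)] [BorelSpace (AddDual L)]
  (m : Measure (AddDual L)) [m.IsMulLeftInvariant]

theorem integral_eq_zero_of_mem_span_dualEval [IsFiniteMeasure m] (hS : 0 ∉ S)
    (hp : p ∈ Submodule.span ℂ (dualEval '' S)) : ∫ η, p η ∂m = 0 := by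
  rw [integral_eq_of_mem_span (ν := 0) _ hp, integral_zero_measure]
  rintro _ ⟨a, ha, rfl⟩
  rw [integral_dualEval_eq_zero m (ne_of_mem_of_not_mem ha hS), integral_zero_measure]

variable [IsProbabilityMeasure m]

theorem sub_integral_smul_one_mem_span_dualEval
    (hp : p ∈ Submodule.span ℂ (dualEvalSubmonoid L : Set C(AddDual L, ℂ))) :
    p - (∫ η, p η ∂m) • 1 ∈ Submodule.span ℂ (dualEval '' {0}ᶜ) := by
  induction hp using Submodule.span_induction with
  | mem f hf =>
    obtain ⟨a, rfl⟩ := hf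
    rcases eq_or_ne a 0 with rfl | ha
    · have hzero : dualEval (0 : L) - (∫ η, dualEval (0 : L) η ∂m) • 1 = 0 := by
        ext η
        simp
      exact hzero ▸ zero_mem _
    · rw [integral_dualEval_eq_zero m ha, zero_smul, sub_zero]
      exact Submodule.subset_span ⟨a, ha, rfl⟩
  | zero => simp
  | add p q _ _ hp hq =>
    simp only [ContinuousMap.add_apply]
    rw [integral_add (integrable_continuousMap p m) (integrable_continuousMap q m), add_smul,
      add_sub_add_comm]
    exact add_mem hp hq
  | smul c p _ hp =>
    simp only [ContinuousMap.smul_apply]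
    rw [integral_smul, smul_assoc, ← smul_sub]
    exact Submodule.smul_mem _ c hp

theorem exists_mem_span_dualEval_integral_norm_sub_le [Countable L] {g : AddDual L → ℂ}
    (hg : Integrable g m) (hg0 : ∫ η, g η ∂m = 0) {ε : ℝ} (hε : 0 < ε) :
    ∃ S : Finset L, 0 ∉ S ∧ ∃ p ∈ Submodule.span ℂ (dualEval '' (S : Set L)),
      ∫ η, ‖g η - p η‖ ∂m ≤ ε := by
  classical
  obtain ⟨p, hp, hgp⟩ := exists_mem_span_integral_norm_sub_le (M := dualEvalSubmonoid L)
    (fun _ => star_mem_dualEvalSubmonoid) (fun _ _ h => addDual_ext fun a => h _ ⟨a, rfl⟩) hg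
    (half_pos hε)
  set c : ℂ := ∫ η, p η ∂m with hc
  have hgp_int : Integrable (fun η => g η - p η) m := hg.sub (integrable_continuousMap p m)
  have hc_le : ‖c‖ ≤ ε / 2 := by
    rw [← norm_neg, ← zero_sub, ← hg0, hc, ← integral_sub hg (integrable_continuousMap p m)]
    exact (norm_integral_le_integral_norm _).trans hgp
  obtain ⟨T, hT, hpT⟩ := Submodule.mem_span_finite_of_mem_span
    (sub_integral_smul_one_mem_span_dualEval m hp)
  obtain ⟨S, hS, hST⟩ := Finset.subset_set_image_iff.1 hT
  refine ⟨S, fun h0 => hS h0 rfl, p - c • 1, by simpa [← hST] using hpT, ?_⟩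
  calc ∫ η, ‖g η - (p - c • 1 : C(AddDual L, ℂ)) η‖ ∂m ≤ ∫ η, (‖g η - p η‖ + ‖c‖) ∂m := by
        refine integral_mono (hg.sub (integrable_continuousMap _ m)).norm
          (hgp_int.norm.add (integrable_const _)) fun η => ?_
        simpa [sub_sub_eq_add_sub, sub_add_eq_add_sub] using norm_add_le (g η - p η) c
    _ = ∫ η, ‖g η - p η‖ ∂m + ‖c‖ := by
        rw [integral_add hgp_int.norm (integrable_const _)]
        simp
    _ ≤ ε := by linarith

end Span

section Field

variable {L : Type*} [Field L] [TopologicalSpace L] [DiscreteTopology L]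

theorem comp_dualSmul_mem_span_dualEval {S : Set L} {p : C(AddDual L, ℂ)}
    (hp : p ∈ Submodule.span ℂ (dualEval '' S)) (a : L) :
    p.comp ⟨dualSmul a, continuous_dualSmul a⟩ ∈ Submodule.span ℂ (dualEval '' (a • S)) := by
  induction hp using Submodule.span_induction with
  | mem f hf =>
    obtain ⟨b, hb, rfl⟩ := hf
    exact Submodule.subset_span ⟨a * b, Set.smul_mem_smul_set hb, by ext; simp⟩
  | zero => simp
  | add p q _ _ hp hq => exact add_mem hp hq
  | smul c p _ hp => exact Submodule.smul_mem _ c hp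

variable [MeasurableSpace (AddDual L)] [BorelSpace (AddDual L)]

theorem exists_mul_add_mul_eq_of_integral_ne_zero (m : Measure (AddDual L)) [m.IsMulLeftInvariant]
    [IsFiniteMeasure m] {S₁ S₂ S₃ : Set L} {p₁ p₂ p₃ : C(AddDual L, ℂ)}
    (hp₁ : p₁ ∈ Submodule.span ℂ (dualEval '' S₁)) (hp₂ : p₂ ∈ Submodule.span ℂ (dualEval '' S₂))
    (hp₃ : p₃ ∈ Submodule.span ℂ (dualEval '' S₃)) {x y z : L}
    (h : ∫ η, p₁ (dualSmul x η) * (p₂ (dualSmul y η) * star (p₃ (dualSmul z η))) ∂m ≠ 0) :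
    ∃ s₁ ∈ S₁, ∃ s₂ ∈ S₂, ∃ s₃ ∈ S₃, s₁ * x + s₂ * y = s₃ * z := by
  contrapose! h
  refine integral_eq_zero_of_mem_span_dualEval m (S := x • S₁ + (y • S₂ + -(z • S₃))) ?_
    (mul_mem_span_dualEval (comp_dualSmul_mem_span_dualEval hp₁ x)
      (mul_mem_span_dualEval (comp_dualSmul_mem_span_dualEval hp₂ y)
        (star_mem_span_dualEval (comp_dualSmul_mem_span_dualEval hp₃ z))))
  rintro ⟨_, ⟨s₁, hs₁, rfl⟩, _, ⟨_, ⟨s₂, hs₂, rfl⟩, t, ⟨s₃, hs₃, ht⟩, rfl⟩, hsum⟩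
  simp only [smul_eq_mul] at hsum ht
  exact h s₁ hs₁ s₂ hs₂ s₃ hs₃ (by linear_combination hsum - ht)

variable [Countable L]

theorem measurableEmbedding_dualSmul {a : L} (ha : a ≠ 0) :
    MeasurableEmbedding (dualSmul a : AddDual L → AddDual L) :=
  (continuous_dualSmul a).measurableEmbedding (dualSmul_injective ha)

variable (m : Measure (AddDual L)) [m.IsMulLeftInvariant] [IsProbabilityMeasure m]

theorem measurePreserving_dualSmul {a : L} (ha : a ≠ 0) : MeasurePreserving (dualSmul a) m m :=
  ⟨measurable_dualSmul a, map_dualSmul_eq_self m ha⟩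

theorem norm_integral_mul_star_sub_le {u : AddDual L → ℂ} (hu : StronglyMeasurable u)
    (hu_le : ∀ η, ‖u η‖ ≤ 1) (p₁ p₂ p₃ : C(AddDual L, ℂ)) (x y z : Lˣ) :
    ‖∫ η, u (dualSmul (x : L) η) *
        (u (dualSmul (y : L) η) * star (u (dualSmul (z : L) η))) ∂m -
      ∫ η, p₁ (dualSmul (x : L) η) *
        (p₂ (dualSmul (y : L) η) * star (p₃ (dualSmul (z : L) η))) ∂m‖ ≤
      ∫ η, ‖u η - p₁ η‖ ∂m + ‖p₁‖ * ∫ η, ‖u η - p₂ η‖ ∂m +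
        ‖p₁‖ * ‖p₂‖ * ∫ η, ‖u η - p₃ η‖ ∂m := by
  have hcomp (a : Lˣ) {g : AddDual L → ℂ} (hg : Integrable g m) :
      Integrable (fun η => g (dualSmul (a : L) η)) m :=
    (measurePreserving_dualSmul m a.ne_zero).integrable_comp_of_integrable hg
  have hdist (a : Lˣ) (p : C(AddDual L, ℂ)) :
      ∫ η, ‖u (dualSmul (a : L) η) - p (dualSmul (a : L) η)‖ ∂m = ∫ η, ‖u η - p η‖ ∂m :=
    (measurePreserving_dualSmul m a.ne_zero).integral_comp
      (measurableEmbedding_dualSmul a.ne_zero) fun η => ‖u η - p η‖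
  have hu_int : Integrable u m := .of_bound hu.aestronglyMeasurable 1 (.of_forall hu_le)
  have hstar {g : AddDual L → ℂ} (hg : Integrable g m) : Integrable (fun η => star (g η)) m :=
    hg.mono hg.1.star (.of_forall fun η => (norm_star (g η)).le)
  have hclose := norm_integral_mul_mul_sub_le (hcomp x hu_int) (hcomp y hu_int)
    (hstar (hcomp z hu_int)) (hcomp x (integrable_continuousMap p₁ m))
    (hcomp y (integrable_continuousMap p₂ m)) (hstar (hcomp z (integrable_continuousMap p₃ m)))
    (fun η => hu_le _) (fun η => (norm_star _).trans_le (hu_le _))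
    (fun η => p₁.norm_coe_le_norm _) (fun η => p₂.norm_coe_le_norm _)
  simpa only [← star_sub, norm_star, hdist] using hclose

theorem mul_div_four_mul_add_one_le {C δ : ℝ} (hC : 0 ≤ C) (hδ : 0 ≤ δ) :
    C * (δ / (4 * (C + 1))) ≤ δ / 4 := by
  rw [← mul_div_assoc, div_le_div_iff₀ (by positivity) (by positivity)]
  nlinarith

theorem exists_finite_mul_add_mul_eq_of_le_norm_integral {u : AddDual L → ℂ}
    (hu : StronglyMeasurable u) (hu_le : ∀ η, ‖u η‖ ≤ 1) (hu_zero : ∫ η, u η ∂m = 0) {δ : ℝ}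
    (hδ : 0 < δ) : ∃ F : Set L, F.Finite ∧ 0 ∉ F ∧ ∀ x y z : Lˣ,
      δ ≤ ‖∫ η, u (dualSmul (x : L) η) *
        (u (dualSmul (y : L) η) * star (u (dualSmul (z : L) η))) ∂m‖ →
      ∃ s₁ ∈ F, ∃ s₂ ∈ F, ∃ s₃ ∈ F, s₁ * (x : L) + s₂ * y = s₃ * z := by
  classical
  have hu_int : Integrable u m := .of_bound hu.aestronglyMeasurable 1 (.of_forall hu_le)
  obtain ⟨S₁, hS₁, p₁, hp₁, hup₁⟩ := exists_mem_span_dualEval_integral_norm_sub_le m hu_int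
    hu_zero (ε := δ / 4) (by positivity)
  obtain ⟨S₂, hS₂, p₂, hp₂, hup₂⟩ := exists_mem_span_dualEval_integral_norm_sub_le m hu_int
    hu_zero (ε := δ / (4 * (‖p₁‖ + 1))) (by positivity)
  obtain ⟨S₃, hS₃, p₃, hp₃, hup₃⟩ := exists_mem_span_dualEval_integral_norm_sub_le m hu_int
    hu_zero (ε := δ / (4 * (‖p₁‖ * ‖p₂‖ + 1))) (by positivity)
  refine ⟨↑(S₁ ∪ S₂ ∪ S₃), Finset.finite_toSet _, by simp [hS₁, hS₂, hS₃], fun x y z h => ?_⟩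
  have hclose := norm_integral_mul_star_sub_le m hu hu_le p₁ p₂ p₃ x y z
  obtain ⟨s₁, hs₁, s₂, hs₂, s₃, hs₃, hs⟩ := exists_mul_add_mul_eq_of_integral_ne_zero m hp₁ hp₂ hp₃
      (x := (x : L)) (y := y) (z := z) fun hzero => by
    rw [hzero, sub_zero] at hclose
    have h₂ := mul_div_four_mul_add_one_le (norm_nonneg p₁) hδ.le
    have h₃ := mul_div_four_mul_add_one_le (mul_nonneg (norm_nonneg p₁) (norm_nonneg p₂)) hδ.le
    have hup₂' := mul_le_mul_of_nonneg_left hup₂ (norm_nonneg p₁)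
    have hup₃' := mul_le_mul_of_nonneg_left hup₃ (mul_nonneg (norm_nonneg p₁) (norm_nonneg p₂))
    linarith
  exact ⟨s₁, by simp_all, s₂, by simp_all, s₃, by simp_all, hs⟩

end Field

end TripleCorrelation

section FieldIsomorphism

open ProbabilityTheory

namespace IsInvariantCoupling

variable {K L : Type*} [Field K] [Field L] [Countable K]
  [TopologicalSpace K] [DiscreteTopology K] [TopologicalSpace L] [DiscreteTopology L]
  [MeasurableSpace (AddDual K)] [MeasurableSpace (AddDual L)] [BorelSpace (AddDual K)]
  {mK : Measure (AddDual K)} {mL : Measure (AddDual L)} {ρ : Kˣ ≃* Lˣ}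
  {θ : Measure (AddDual K × AddDual L)}

theorem compProd_condDistrib [IsFiniteMeasure θ] (hθ : IsInvariantCoupling mK mL ρ θ) :
    mL ⊗ₘ condDistrib Prod.fst Prod.snd θ = θ.map Prod.swap := by
  rw [← hθ.map_snd, compProd_map_condDistrib measurable_fst.aemeasurable]
  rfl

variable [Countable L] [BorelSpace (AddDual L)]

theorem integral_fiberCoeff_condDistrib_mul [IsFiniteMeasure θ]
    (hθ : IsInvariantCoupling mK mL ρ θ) (a : K) (b : L) :
    ∫ η, fiberCoeff (condDistrib Prod.fst Prod.snd θ) a η * dualEval b η ∂mL =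
      ∫ p, dualEval a p.1 * dualEval b p.2 ∂θ := by
  have hmeas : Measurable fun p : AddDual L × AddDual K => dualEval a p.2 * dualEval b p.1 :=
    ((measurable_dualEval a).comp measurable_snd).mul
      ((measurable_dualEval b).comp measurable_fst)
  have hint : Integrable (fun p : AddDual L × AddDual K => dualEval a p.2 * dualEval b p.1)
      (mL ⊗ₘ condDistrib Prod.fst Prod.snd θ) := by
    rw [hθ.compProd_condDistrib]
    exact .of_bound hmeas.aestronglyMeasurable 1 (.of_forall fun p => by simp)
  have hmL : IsFiniteMeasure mL := hθ.map_snd ▸ inferInstance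
  have hswap : ∫ p, dualEval a p.2 * dualEval b p.1 ∂(mL ⊗ₘ condDistrib Prod.fst Prod.snd θ) =
      ∫ p, dualEval a p.1 * dualEval b p.2 ∂θ := by
    rw [hθ.compProd_condDistrib, integral_map measurable_swap.aemeasurable
      hmeas.aestronglyMeasurable]
    rfl
  rw [← hswap, Measure.integral_compProd hint]
  simp only [integral_mul_const, fiberCoeff]

variable [mL.IsMulLeftInvariant] [IsProbabilityMeasure mL]

theorem ae_map_condDistrib_eq [IsFiniteMeasure θ] (hθ : IsInvariantCoupling mK mL ρ θ)
    (a : Kˣ) : ∀ᵐ η ∂mL, (condDistrib Prod.fst Prod.snd θ η).map (dualSmul (a : K)) =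
      condDistrib Prod.fst Prod.snd θ (dualSmul (ρ a : L) η) := by
  refine ae_map_eq_of_map_compProd_eq (measurePreserving_dualSmul mL (ρ a).ne_zero)
    (measurableEmbedding_dualSmul (ρ a).ne_zero) (measurable_dualSmul _) ?_
  have hK := measurable_dualSmul (a : K)
  have hL := measurable_dualSmul (ρ a : L)
  rw [hθ.compProd_condDistrib, Measure.map_map (hL.prodMap hK) measurable_swap]
  nth_rw 2 [← hθ.map_smul a]
  rw [Measure.map_map measurable_swap (hK.prodMap hL)]
  rfl

variable [Infinite K] [mK.IsHaarMeasure] [IsProbabilityMeasure mK]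

theorem exists_finite_mul_add_mul_eq (hθ : IsInvariantCoupling mK mL ρ θ)
    (hne : θ ≠ mK.prod mL) : ∃ F : Set L, F.Finite ∧ 0 ∉ F ∧
      ∀ x y z : Kˣ, (x : K) + y = z → ∃ s₁ ∈ F, ∃ s₂ ∈ F, ∃ s₃ ∈ F,
        s₁ * (ρ x : L) + s₂ * (ρ y : L) = s₃ * (ρ z : L) := by
  have := hθ.isProbabilityMeasure
  set q := condDistrib (Prod.fst : AddDual K × AddDual L → AddDual K) Prod.snd θ with hq
  have hq_ne : ¬ fiberCoeff q 1 =ᵐ[mL] 0 := by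
    intro hzero
    obtain ⟨b, hb⟩ := hθ.exists_integral_dualEval_ne_zero hne
    refine hb ?_
    rw [← hθ.integral_fiberCoeff_condDistrib_mul, ← hq]
    refine integral_eq_zero_of_ae ?_
    filter_upwards [hzero] with η hη
    simp [hη]
  have hq_mean : ∫ η, fiberCoeff q 1 η ∂mL = 0 := by
    have h := hθ.integral_fiberCoeff_condDistrib_mul 1 0
    simp only [dualEval_zero, mul_one] at h
    rw [h, hθ.integral_dualEval_fst, integral_dualEval_eq_zero mK one_ne_zero]
  obtain ⟨δ, hδ, hle⟩ := exists_pos_le_norm_integral_fiberCoeff mK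
    (fun k => measurePreserving_dualSmul mL (ρ k).ne_zero) hθ.ae_map_condDistrib_eq hq_ne
  obtain ⟨F, hF, hF0, h⟩ := exists_finite_mul_add_mul_eq_of_le_norm_integral mL
    (stronglyMeasurable_fiberCoeff q 1) (norm_fiberCoeff_le q 1) hq_mean hδ
  exact ⟨F, hF, hF0, fun x y z hsum => h (ρ x) (ρ y) (ρ z) (hle x y z hsum)⟩

theorem exists_ringEquiv (hθ : IsInvariantCoupling mK mL ρ θ) (hne : θ ≠ mK.prod mL) :
    ∃ (w : Kˣ →* Lˣ) (κ : K ≃+* L), (Set.range w).Finite ∧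
      ∀ x : Kˣ, κ (x : K) = w x * (ρ x : L) := by
  obtain ⟨F, hF, hF0, h⟩ := hθ.exists_finite_mul_add_mul_eq hne
  exact exists_ringEquiv_eq_mul ρ hF hF0 h

end IsInvariantCoupling

end FieldIsomorphism

section Classification

variable {K L : Type*} [Field K] [Field L] [TopologicalSpace K] [DiscreteTopology K]
  [TopologicalSpace L]

/-- The map `κ* : η ↦ η ∘ κ` on duals induced by a field isomorphism `κ`. -/
abbrev ringDual (κ : K ≃+* L) : AddDual L → AddDual K := dualComp κ.toAddEquiv.toAddMonoidHom

theorem ringDual_injective (κ : K ≃+* L) : Function.Injective (ringDual κ) := fun η ζ h =>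
  addDual_ext fun b => by simpa using congrArg (dualEval (κ.symm b)) h

theorem measurable_ringDual [MeasurableSpace (AddDual K)] [BorelSpace (AddDual K)]
    [MeasurableSpace (AddDual L)] [BorelSpace (AddDual L)] (κ : K ≃+* L) :
    Measurable (ringDual κ) :=
  (continuous_dualComp _).measurable

variable [DiscreteTopology L]

/-- The parametrization `η ↦ (κ* η, c* η)` by the dual of `L` of the support of an ergodic
component of a non-trivial coupling. -/
def dualGraphMap (κ : K ≃+* L) (c : Lˣ) (η : AddDual L) : AddDual K × AddDual L :=
  (ringDual κ η, dualSmul (c : L) η)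

/-- The set of all `(κ* η, c* η)`, that is, the range of `dualGraphMap κ c`, written as the graph
of a function of the second coordinate. -/
def dualGraph (κ : K ≃+* L) (c : Lˣ) : Set (AddDual K × AddDual L) :=
  {p | p.1 = ringDual κ (dualSmul (c⁻¹ : L) p.2)}

/-- The deviation of a pair from `dualGraph κ c`, as an element of the dual of `K`. -/
def dualDefect (κ : K ≃+* L) (c : Lˣ) (p : AddDual K × AddDual L) : AddDual K :=
  p.1 * (ringDual κ (dualSmul (c⁻¹ : L) p.2))⁻¹

theorem preimage_dualDefect_singleton_one (κ : K ≃+* L) (c : Lˣ) :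
    dualDefect κ c ⁻¹' {1} = dualGraph κ c :=
  Set.ext fun _ => mul_inv_eq_one

theorem dualEval_dualDefect (κ : K ≃+* L) (c : Lˣ) (a : K) (p : AddDual K × AddDual L) :
    dualEval a (dualDefect κ c p) = dualEval a p.1 * dualEval (-((c : L)⁻¹ * κ a)) p.2 := by
  simp [dualDefect, dualEval_mul, dualEval_inv, dualEval_neg]

theorem dualGraphMap_dualSmul_inv {κ : K ≃+* L} {c : Lˣ} {p : AddDual K × AddDual L}
    (hp : p ∈ dualGraph κ c) : dualGraphMap κ c (dualSmul (c⁻¹ : L) p.2) = p := by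
  refine Prod.ext hp.symm ?_
  simp [dualGraphMap, dualSmul_dualSmul]

theorem dualGraph_inter_subset (κ : K ≃+* L) {c d : Lˣ} (hcd : c ≠ d) :
    dualGraph κ c ∩ dualGraph κ d ⊆ Prod.snd ⁻¹' {1} := by
  rintro p ⟨hc, hd⟩
  by_contra hp
  refine hcd (Units.ext (inv_injective (dualSmul_left_injective hp ?_)))
  exact ringDual_injective κ (hc.symm.trans hd)

section Equivariance

variable {ρ : Kˣ ≃* Lˣ} {w : Kˣ →* Lˣ} {κ : K ≃+* L}

theorem dualDefect_prodMap_dualSmul (hκ : ∀ x : Kˣ, κ (x : K) = w x * (ρ x : L)) (x : Kˣ)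
    (c : Lˣ) (p : AddDual K × AddDual L) :
    dualDefect κ c (Prod.map (dualSmul (x : K)) (dualSmul (ρ x : L)) p) =
      dualSmul (x : K) (dualDefect κ (c * w x) p) := by
  refine addDual_ext fun a => ?_
  have hscale : (ρ x : L) * -((c : L)⁻¹ * κ a) = -(((c * w x : Lˣ) : L)⁻¹ * κ (x * a)) := by
    rw [map_mul, hκ, Units.val_mul]
    field_simp
  simp only [dualEval_dualDefect, dualEval_dualSmul, Prod.map_fst, Prod.map_snd, hscale]

theorem preimage_prodMap_dualSmul_dualGraph (hκ : ∀ x : Kˣ, κ (x : K) = w x * (ρ x : L))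
    (x : Kˣ) (c : Lˣ) :
    Prod.map (dualSmul (x : K)) (dualSmul (ρ x : L)) ⁻¹' dualGraph κ c =
      dualGraph κ (c * w x) := by
  simp only [← preimage_dualDefect_singleton_one]
  ext p
  simp [dualDefect_prodMap_dualSmul hκ, dualSmul_eq_one_iff]

theorem preimage_prodMap_dualSmul_iUnion_dualGraph
    (hκ : ∀ x : Kˣ, κ (x : K) = w x * (ρ x : L)) (x : Kˣ) (c : Lˣ) :
    Prod.map (dualSmul (x : K)) (dualSmul (ρ x : L)) ⁻¹'
        (⋃ d : Set.range w, dualGraph κ (c * d)) =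
      ⋃ d : Set.range w, dualGraph κ (c * d) := by
  simp only [Set.iUnion_coe_set, Set.biUnion_range, Set.preimage_iUnion,
    preimage_prodMap_dualSmul_dualGraph hκ, mul_assoc, ← map_mul]
  exact (Equiv.mulRight x).surjective.iUnion_comp fun y => dualGraph κ (c * w y)

end Equivariance

variable [MeasurableSpace (AddDual K)] [BorelSpace (AddDual K)] [MeasurableSpace (AddDual L)]
  [BorelSpace (AddDual L)]

theorem measurable_dualGraphMap (κ : K ≃+* L) (c : Lˣ) : Measurable (dualGraphMap κ c) :=
  (measurable_ringDual κ).prodMk (measurable_dualSmul _)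

theorem map_dualGraphMap_map_prodMap (κ : K ≃+* L) (b c : Lˣ) (m : Measure (AddDual L)) :
    (m.map (dualGraphMap κ c)).map (Prod.map id (dualSmul (b : L))) =
      m.map (dualGraphMap κ (b * c)) := by
  rw [Measure.map_map (measurable_id.prodMap (measurable_dualSmul _))
    (measurable_dualGraphMap κ c)]
  congr 1
  ext1 η
  simp [dualGraphMap, dualSmul_dualSmul]

variable [Countable K]

theorem measurable_dualDefect (κ : K ≃+* L) (c : Lˣ) : Measurable (dualDefect κ c) :=
  measurable_fst.mul (((measurable_ringDual κ).comp
    ((measurable_dualSmul _).comp measurable_snd)).inv)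

theorem measurableSet_dualGraph (κ : K ≃+* L) (c : Lˣ) : MeasurableSet (dualGraph κ c) := by
  rw [← preimage_dualDefect_singleton_one]
  exact measurable_dualDefect κ c (measurableSet_singleton 1)

theorem integral_dualEval_map_dualDefect (κ : K ≃+* L) (c : Lˣ)
    (θ : Measure (AddDual K × AddDual L)) (a : K) :
    ∫ ξ, dualEval a ξ ∂θ.map (dualDefect κ c) =
      ∫ p, dualEval a p.1 * dualEval (-((c : L)⁻¹ * κ a)) p.2 ∂θ := by
  rw [integral_map (measurable_dualDefect κ c).aemeasurable
    (measurable_dualEval a).aestronglyMeasurable]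
  simp only [dualEval_dualDefect]

theorem measure_iUnion_dualGraph_eq_one {ρ : Kˣ ≃* Lˣ} {w : Kˣ →* Lˣ} {κ : K ≃+* L}
    {θ : Measure (AddDual K × AddDual L)} [Countable (Set.range w)]
    (hκ : ∀ x : Kˣ, κ (x : K) = w x * (ρ x : L))
    (herg : IsErgodicFamily
      (fun a : Kˣ => Prod.map (dualSmul (a : K)) (dualSmul (ρ a : L))) θ)
    {b : Lˣ} (hb : θ (dualGraph κ b) ≠ 0) :
    θ (⋃ c : Set.range w, dualGraph κ (b * c)) = 1 := by
  refine (herg _ (.iUnion fun c => measurableSet_dualGraph κ _) fun x =>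
    preimage_prodMap_dualSmul_iUnion_dualGraph hκ x b).resolve_left fun hzero => hb ?_
  refine measure_mono_null (fun p hp => ?_) hzero
  exact Set.mem_iUnion.2 ⟨⟨1, 1, map_one w⟩, by simpa using hp⟩

namespace IsInvariantCoupling

variable {mK : Measure (AddDual K)} {mL : Measure (AddDual L)} {ρ : Kˣ ≃* Lˣ}
  {θ : Measure (AddDual K × AddDual L)} {w : Kˣ →* Lˣ} {κ : K ≃+* L}

theorem measure_dualGraph_mul (hθ : IsInvariantCoupling mK mL ρ θ)
    (hκ : ∀ x : Kˣ, κ (x : K) = w x * (ρ x : L)) (c : Lˣ) (x : Kˣ) :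
    θ (dualGraph κ (c * w x)) = θ (dualGraph κ c) := by
  nth_rw 2 [← hθ.map_smul x]
  rw [Measure.map_apply ((measurable_dualSmul _).prodMap (measurable_dualSmul _))
    (measurableSet_dualGraph κ c), preimage_prodMap_dualSmul_dualGraph hκ]

theorem map_dualSmul_map_dualDefect (hθ : IsInvariantCoupling mK mL ρ θ)
    (hκ : ∀ x : Kˣ, κ (x : K) = w x * (ρ x : L)) (c : Lˣ) {x : Kˣ} (hx : x ∈ w.ker) :
    (θ.map (dualDefect κ c)).map (dualSmul (x : K)) = θ.map (dualDefect κ c) := by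
  have hcomp : dualSmul (x : K) ∘ dualDefect κ c =
      dualDefect κ c ∘ Prod.map (dualSmul (x : K)) (dualSmul (ρ x : L)) := by
    ext1 p
    simp only [Function.comp_apply, dualDefect_prodMap_dualSmul hκ, w.mem_ker.1 hx, mul_one]
  rw [Measure.map_map (measurable_dualSmul _) (measurable_dualDefect κ c), hcomp,
    ← Measure.map_map (measurable_dualDefect κ c)
      ((measurable_dualSmul _).prodMap (measurable_dualSmul _)), hθ.map_smul]

theorem map_dualSmul_map_snd_restrict_dualGraph (hθ : IsInvariantCoupling mK mL ρ θ)
    (hκ : ∀ x : Kˣ, κ (x : K) = w x * (ρ x : L)) (c : Lˣ) {x : Kˣ} (hx : x ∈ w.ker) :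
    ((θ.restrict (dualGraph κ c)).map Prod.snd).map (dualSmul (ρ x : L)) =
      (θ.restrict (dualGraph κ c)).map Prod.snd := by
  have hact : Measurable (Prod.map (dualSmul (x : K)) (dualSmul (ρ x : L))) :=
    (measurable_dualSmul _).prodMap (measurable_dualSmul _)
  have hpre : Prod.map (dualSmul (x : K)) (dualSmul (ρ x : L)) ⁻¹' dualGraph κ c =
      dualGraph κ c := by
    rw [preimage_prodMap_dualSmul_dualGraph hκ, w.mem_ker.1 hx, mul_one]
  have hrestrict := Measure.restrict_map (μ := θ) hact (measurableSet_dualGraph κ c)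
  rw [hθ.map_smul, hpre] at hrestrict
  nth_rw 2 [hrestrict]
  rw [Measure.map_map (measurable_dualSmul _) measurable_snd,
    Measure.map_map measurable_snd hact]
  rfl

variable [Countable L] [mL.IsHaarMeasure] [IsProbabilityMeasure mL]

theorem exists_measure_dualGraph_ne_zero [Infinite K] [mK.IsHaarMeasure]
    [IsProbabilityMeasure mK] (hθ : IsInvariantCoupling mK mL ρ θ) (hne : θ ≠ mK.prod mL)
    (hκ : ∀ x : Kˣ, κ (x : K) = w x * (ρ x : L)) [Finite w.range] :
    ∃ c : Lˣ, θ (dualGraph κ c) ≠ 0 := by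
  have := hθ.isProbabilityMeasure
  obtain ⟨b, hb⟩ := hθ.exists_integral_dualEval_ne_zero hne
  refine ⟨-b⁻¹, fun hzero => hb ?_⟩
  have hrigid := integral_dualEval_eq_of_map_dualSmul mK
    (fun x hx => hθ.map_dualSmul_map_dualDefect hκ (-b⁻¹) (x := x) hx) one_ne_zero
  rw [integral_dualEval_map_dualDefect, map_measureReal_apply (measurable_dualDefect κ _)
    (measurableSet_singleton 1), preimage_dualDefect_singleton_one, measureReal_def, hzero]
    at hrigid
  simpa [inv_neg] using hrigid

variable [Infinite L]

theorem map_snd_restrict_dualGraph (hθ : IsInvariantCoupling mK mL ρ θ)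
    (hκ : ∀ x : Kˣ, κ (x : K) = w x * (ρ x : L)) [Finite w.range] (c : Lˣ) :
    (θ.restrict (dualGraph κ c)).map Prod.snd = θ (dualGraph κ c) • mL := by
  have := hθ.isProbabilityMeasure
  set σ := (θ.restrict (dualGraph κ c)).map Prod.snd with hσ
  have hσ_map : ∀ y ∈ w.ker.map ρ.toMonoidHom, σ.map (dualSmul (y : L)) = σ := by
    rintro _ ⟨x, hx, rfl⟩
    exact hθ.map_dualSmul_map_snd_restrict_dualGraph hκ c hx
  have hσ_one : σ {1} = 0 := by
    rw [hσ, Measure.map_apply measurable_snd (measurableSet_singleton 1)]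
    exact le_antisymm ((Measure.restrict_le_self _).trans
      hθ.measure_preimage_snd_singleton_one.le) bot_le
  have : (w.ker.map ρ.toMonoidHom).FiniteIndex :=
    ⟨(Subgroup.index_map_equiv w.ker ρ).trans_ne Subgroup.FiniteIndex.index_ne_zero⟩
  have := mL.smul_finite (measure_ne_top θ (dualGraph κ c))
  refine measure_ext_dualEval fun b => ?_
  rw [integral_smul_measure]
  rcases eq_or_ne b 0 with rfl | hb
  · simp [hσ, measureReal_def, Measure.map_apply measurable_snd .univ]
  · rw [integral_dualEval_eq_zero_of_map_dualSmul mL hσ_map hσ_one hb,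
      integral_dualEval_eq_zero mL hb, smul_zero]

theorem restrict_dualGraph (hθ : IsInvariantCoupling mK mL ρ θ)
    (hκ : ∀ x : Kˣ, κ (x : K) = w x * (ρ x : L)) [Finite w.range] (c : Lˣ) :
    θ.restrict (dualGraph κ c) = θ (dualGraph κ c) • mL.map (dualGraphMap κ c) := by
  have hae : (fun p => dualGraphMap κ c (dualSmul (c⁻¹ : L) p.2))
      =ᵐ[θ.restrict (dualGraph κ c)] id :=
    (ae_restrict_mem (measurableSet_dualGraph κ c)).mono fun _ => dualGraphMap_dualSmul_inv
  have hmeas := measurable_dualSmul (c⁻¹ : L)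
  calc θ.restrict (dualGraph κ c)
      = (θ.restrict (dualGraph κ c)).map
          (dualGraphMap κ c ∘ dualSmul (c⁻¹ : L) ∘ Prod.snd) :=
        Measure.map_id.symm.trans (Measure.map_congr hae.symm)
    _ = ((θ (dualGraph κ c) • mL).map (dualSmul (c⁻¹ : L))).map (dualGraphMap κ c) := by
        rw [← hθ.map_snd_restrict_dualGraph hκ, Measure.map_map hmeas measurable_snd,
          Measure.map_map (measurable_dualGraphMap κ c) (hmeas.comp measurable_snd)]
    _ = θ (dualGraph κ c) • mL.map (dualGraphMap κ c) := by
        rw [Measure.map_smul, map_dualSmul_eq_self mL (inv_ne_zero c.ne_zero),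
          Measure.map_smul]

theorem eq_smul_sum_map_dualGraphMap (hθ : IsInvariantCoupling mK mL ρ θ)
    (hκ : ∀ x : Kˣ, κ (x : K) = w x * (ρ x : L)) (hw : (Set.range w).Finite)
    (herg : IsErgodicFamily
      (fun a : Kˣ => Prod.map (dualSmul (a : K)) (dualSmul (ρ a : L))) θ)
    {b : Lˣ} (hb : θ (dualGraph κ b) ≠ 0) :
    θ = (hw.toFinset.card : ℝ≥0∞)⁻¹ •
      ∑ c ∈ hw.toFinset, mL.map (dualGraphMap κ (b * c)) := by
  have := hθ.isProbabilityMeasure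
  have : Finite w.range := hw
  have : Fintype (Set.range w) := hw.fintype
  have hfull : ∀ᵐ p ∂θ, p ∈ ⋃ c : Set.range w, dualGraph κ (b * c) :=
    mem_ae_iff_prob_eq_one (.iUnion fun c => measurableSet_dualGraph κ _) |>.2 <|
      measure_iUnion_dualGraph_eq_one hκ herg hb
  have hdecomp : θ = θ (dualGraph κ b) •
      ∑ c ∈ hw.toFinset, mL.map (dualGraphMap κ (b * c)) := by
    have hdisj : Pairwise fun c d : Set.range w =>
        AEDisjoint θ (dualGraph κ (b * c)) (dualGraph κ (b * d)) := fun c d hcd =>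
      measure_mono_null
        (dualGraph_inter_subset κ fun h => hcd (Subtype.ext (mul_left_cancel h)))
        hθ.measure_preimage_snd_singleton_one
    have hweight (c : Set.range w) : θ (dualGraph κ (b * c)) = θ (dualGraph κ b) := by
      obtain ⟨_, x, rfl⟩ := c
      exact hθ.measure_dualGraph_mul hκ b x
    nth_rw 1 [← Measure.restrict_eq_self_of_ae_mem hfull, Measure.restrict_iUnion_ae hdisj
      fun c => (measurableSet_dualGraph κ _).nullMeasurableSet, Measure.sum_fintype]
    simp only [hθ.restrict_dualGraph hκ, hweight, ← Finset.smul_sum]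
    rw [Finset.sum_subtype hw.toFinset fun _ => hw.mem_toFinset]
  have hmass : θ (dualGraph κ b) * hw.toFinset.card = 1 := by
    have huniv := congrArg (fun μ => μ Set.univ) hdecomp
    simpa [Measure.map_apply (measurable_dualGraphMap κ _)] using huniv.symm
  rwa [ENNReal.eq_inv_of_mul_eq_one_left hmass] at hdecomp

theorem exists_eq_map_smul_sum [Infinite K] [mK.IsHaarMeasure] [IsProbabilityMeasure mK]
    (hθ : IsInvariantCoupling mK mL ρ θ) (hne : θ ≠ mK.prod mL)
    (hκ : ∀ x : Kˣ, κ (x : K) = w x * (ρ x : L)) (hw : (Set.range w).Finite)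
    (herg : IsErgodicFamily
      (fun a : Kˣ => Prod.map (dualSmul (a : K)) (dualSmul (ρ a : L))) θ) :
    ∃ b : Lˣ, θ = ((hw.toFinset.card : ℝ≥0∞)⁻¹ •
      ∑ c ∈ hw.toFinset, mL.map (dualGraphMap κ c)).map (Prod.map id (dualSmul (b : L))) := by
  have : Finite w.range := hw
  obtain ⟨b, hb⟩ := hθ.exists_measure_dualGraph_ne_zero hne hκ
  refine ⟨b, ?_⟩
  rw [Measure.map_smul, Measure.map_finset_sum
    (measurable_id.prodMap (measurable_dualSmul _)).aemeasurable]
  simp only [map_dualGraphMap_map_prodMap]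
  exact hθ.eq_smul_sum_map_dualGraphMap hκ hw herg hb

end IsInvariantCoupling

end Classification

theorem statement0
    {K L : Type*} [Field K] [Countable K] [Infinite K] [Field L] [Countable L] [Infinite L]
    [TopologicalSpace K] [DiscreteTopology K] [TopologicalSpace L] [DiscreteTopology L]
    [MeasurableSpace (AddDual K)] [BorelSpace (AddDual K)]
    [MeasurableSpace (AddDual L)] [BorelSpace (AddDual L)]
    (mK : Measure (AddDual K)) [mK.IsHaarMeasure] [IsProbabilityMeasure mK]
    (mL : Measure (AddDual L)) [mL.IsHaarMeasure] [IsProbabilityMeasure mL]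
    (ρ : Kˣ ≃* Lˣ)
    (hnotdisjoint : ∃ θ : Measure (AddDual K × AddDual L),
      θ.map Prod.fst = mK ∧ θ.map Prod.snd = mL ∧
      (∀ a : Kˣ,
        θ.map (Prod.map (dualSmul (a : K)) (dualSmul ((ρ a : Lˣ) : L))) = θ) ∧
      θ ≠ mK.prod mL) :
    ∃ (w : Kˣ →* Lˣ) (hw : (Set.range w).Finite) (κ : K ≃+* L),
      (∀ x : Kˣ, κ (x : K) = ((w x : L)) * ((ρ x : Lˣ) : L)) ∧
      ∀ θ : Measure (AddDual K × AddDual L),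
        θ.map Prod.fst = mK → θ.map Prod.snd = mL →
        (∀ a : Kˣ,
          θ.map (Prod.map (dualSmul (a : K)) (dualSmul ((ρ a : Lˣ) : L))) = θ) →
        IsErgodicFamily
          (fun a : Kˣ => Prod.map (dualSmul (a : K)) (dualSmul ((ρ a : Lˣ) : L))) θ →
        θ ≠ mK.prod mL →
        ∃ b : Lˣ,
          θ = (((hw.toFinset.card : ℝ≥0∞))⁻¹ •
              ∑ c ∈ hw.toFinset, Measure.map
                (fun η : AddDual L =>
                  (dualComp κ.toAddEquiv.toAddMonoidHom η, dualSmul ((c : Lˣ) : L) η)) mL).map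
            (Prod.map id (dualSmul ((b : Lˣ) : L))) := by
  obtain ⟨θ₀, hfst, hsnd, hinv, hne⟩ := hnotdisjoint
  obtain ⟨w, κ, hw, hκ⟩ := IsInvariantCoupling.exists_ringEquiv ⟨hfst, hsnd, hinv⟩ hne
  exact ⟨w, hw, κ, hκ, fun _ hfst hsnd hinv herg hne =>
    IsInvariantCoupling.exists_eq_map_smul_sum ⟨hfst, hsnd, hinv⟩ hne hκ hw herg⟩

end
end

section
/- Let K be a countably infinite field and let (F_n) be a double Følner sequence in K. Then for all additive characters ξ₁, ξ₂ ∈ K̂ with ξ₁ ≠ 1, the Følner–Kloosterman averages satisfy lim_{n→∞} (1/|F_n|) Σ_{a ∈ F_n \ {0}} ξ₁(a) ξ₂(a^{-1}) = 0. -/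
open Filter Topology
open scoped Classical

/-- A (additive) Følner sequence in a countable abelian group. -/
def IsAddFolner {A : Type*} [AddCommGroup A] (F : ℕ → Finset A) : Prop :=
  (∀ n, (F n).Nonempty) ∧
    ∀ a : A, Tendsto
      (fun n => ((F n ∩ (F n).image (· + a)).card : ℝ) / ((F n).card : ℝ)) atTop (𝓝 1)

/-- A double Følner sequence in a field: a Følner sequence for the additive group which is
also asymptotically invariant under multiplication by every nonzero element. -/
def IsDoubleFolner {K : Type*} [Field K] (F : ℕ → Finset K) : Prop :=
  IsAddFolner F ∧
    ∀ a : K, a ≠ 0 → Tendsto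
      (fun n => ((F n ∩ (F n).image (a * ·)).card : ℝ) / ((F n).card : ℝ)) atTop (𝓝 1)

/-!
Along an ultrafilter the averages over `F` define a positive functional `φ` on `ℓ^∞(K, ℂ)`, which is
invariant under the affine maps of `K`. It turns `ℓ^∞(K, ℂ)` into a semi-inner product space in
which bounded families of asymptotically orthogonal vectors tend weakly to `0`. Put
`e a b x = ξ₁ (a * x) * ξ₂ (b * x⁻¹)`, so that `⟪e a b, e a' b'⟫ = φ (e (a' - a) (b' - b))`.
Translations give `φ (e a 0) = 0` for `a ≠ 0`: the functions `e a 1` are orthogonal, hence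
`φ (e a 1) → 0` as `a` leaves finite sets. Dilations give `φ (e a b) = φ (e (a * b) 1)`, so the
functions `e u u⁻¹` have inner products `φ (e ((u - v) * (u⁻¹ - v⁻¹)) 1)` and are therefore
asymptotically orthogonal. Hence `φ (e u u⁻¹) → 0`; but `φ (e u u⁻¹) = φ (e 1 1)` for all `u`, and
`φ (e 1 1)` is the limit of the given averages, since a single point has mean `0`.
-/

section AsymptoticOrthogonality

open scoped InnerProductSpace

variable {𝕜 E ι : Type*} [RCLike 𝕜] {l : Filter ι} {w : ι → E} {C : ℝ}

lemma isClosed_setOf_tendsto_inner_zero [SeminormedAddCommGroup E] [InnerProductSpace 𝕜 E]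
    (hC : ∀ i, ‖w i‖ ≤ C) : IsClosed {z | Tendsto (fun i => ⟪z, w i⟫_𝕜) l (𝓝 0)} := by
  have lipschitz (i : ι) : LipschitzWith C.toNNReal fun z => ⟪z, w i⟫_𝕜 :=
    .of_dist_le' fun z z' => by
      rw [dist_eq_norm, dist_eq_norm, ← inner_sub_left, mul_comm]
      exact (norm_inner_le_norm _ _).trans (by gcongr; exact hC i)
  exact (LipschitzWith.uniformEquicontinuous _ _ lipschitz).equicontinuous
    |>.isClosed_setOfPred_tendsto continuous_const

lemma tendsto_inner_zero_of_mem_span [SeminormedAddCommGroup E] [InnerProductSpace 𝕜 E]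
    (hw : ∀ j, Tendsto (fun i => ⟪w j, w i⟫_𝕜) l (𝓝 0)) {z : E}
    (hz : z ∈ Submodule.span 𝕜 (Set.range w)) : Tendsto (fun i => ⟪z, w i⟫_𝕜) l (𝓝 0) := by
  induction hz using Submodule.span_induction with
  | mem z hz => obtain ⟨j, rfl⟩ := hz; exact hw j
  | zero => simpa using tendsto_const_nhds
  | add z z' _ _ hz hz' => simpa [inner_add_left] using hz.add hz'
  | smul c z _ hz => simpa [inner_smul_left] using hz.const_mul (starRingEnd 𝕜 c)

lemma tendsto_inner_zero_of_completeSpace [NormedAddCommGroup E] [InnerProductSpace 𝕜 E]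
    [CompleteSpace E] (hC : ∀ i, ‖w i‖ ≤ C)
    (hw : ∀ j, Tendsto (fun i => ⟪w j, w i⟫_𝕜) l (𝓝 0)) (y : E) :
    Tendsto (fun i => ⟪y, w i⟫_𝕜) l (𝓝 0) := by
  let M := (Submodule.span 𝕜 (Set.range w)).topologicalClosure
  have tendsto_of_mem {z : E} (hz : z ∈ M) : Tendsto (fun i => ⟪z, w i⟫_𝕜) l (𝓝 0) :=
    closure_minimal (fun _ => tendsto_inner_zero_of_mem_span hw)
      (isClosed_setOf_tendsto_inner_zero hC) hz
  have inner_proj (i : ι) : ⟪M.starProjection y, w i⟫_𝕜 = ⟪y, w i⟫_𝕜 := by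
    have hwM : w i ∈ M :=
      Submodule.le_topologicalClosure _ (Submodule.subset_span (Set.mem_range_self i))
    rw [Submodule.inner_starProjection_left_eq_right, Submodule.starProjection_eq_self_iff.2 hwM]
  simpa only [inner_proj] using tendsto_of_mem (M.starProjection_apply_mem y)

theorem tendsto_inner_zero_of_asymptotically_orthogonal [SeminormedAddCommGroup E]
    [InnerProductSpace 𝕜 E] (hC : ∀ i, ‖w i‖ ≤ C)
    (hw : ∀ j, Tendsto (fun i => ⟪w j, w i⟫_𝕜) l (𝓝 0)) (y : E) :
    Tendsto (fun i => ⟪y, w i⟫_𝕜) l (𝓝 0) := by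
  have h := tendsto_inner_zero_of_completeSpace (𝕜 := 𝕜) (l := l) (C := C)
    (w := fun i => (w i : UniformSpace.Completion E))
  simp only [UniformSpace.Completion.norm_coe, UniformSpace.Completion.inner_coe] at h
  simpa only [UniformSpace.Completion.inner_coe] using h hC hw y

end AsymptoticOrthogonality

section PositiveFunctional

open scoped ComplexOrder ComplexConjugate InnerProductSpace

variable {A ι : Type*} [Ring A] [StarRing A] [Algebra ℂ A] [StarModule ℂ A] {φ : A →ₗ[ℂ] ℂ}

lemma map_star_of_map_star_mul_self_nonneg (hφ : ∀ a, 0 ≤ φ (star a * a)) (a : A) :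
    φ (star a) = conj (φ a) := by
  have im_map_star_mul_self (b : A) : (φ (star b * b)).im = 0 :=
    (Complex.nonneg_iff.1 (hφ b)).2.symm
  have im_one : (φ 1).im = 0 := by simpa only [star_one, mul_one] using im_map_star_mul_self 1
  -- Polarization: `1 + a` yields the imaginary part of the claim, `1 + I • a` the real part.
  have im_add : (φ a).im + (φ (star a)).im = 0 := by
    have h := im_map_star_mul_self (1 + a)
    simp only [star_add, star_one, add_mul, mul_add, one_mul, mul_one, map_add, Complex.add_im,
      im_one, im_map_star_mul_self] at h
    linarith
  have re_sub : (φ a).re - (φ (star a)).re = 0 := by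
    have h := im_map_star_mul_self (1 + Complex.I • a)
    simp only [star_add, star_one, star_smul, RCLike.star_def, Complex.conj_I, add_mul, mul_add,
      one_mul, mul_one, smul_mul_smul_comm, neg_mul, Complex.I_mul_I, neg_neg, one_smul, map_add,
      map_smul, smul_eq_mul, Complex.add_im, Complex.neg_im, Complex.I_mul_im, im_one,
      im_map_star_mul_self] at h
    linarith
  exact Complex.ext (by rw [Complex.conj_re]; linarith) (by rw [Complex.conj_im]; linarith)

/-- The semi-inner product `⟪a, b⟫ = φ (star a * b)` of the Gelfand–Naimark–Segal construction.
Mathlib's `PositiveLinearMap.PreGNS` needs an order on `A` making it a star-ordered C⋆-algebra; here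
positivity of `φ` is a hypothesis on squares, so that `A` can be `ℓ^∞`. -/
@[reducible] def gnsCore (hφ : ∀ a, 0 ≤ φ (star a * a)) : PreInnerProductSpace.Core ℂ A where
  inner a b := φ (star a * b)
  conj_inner_symm a b := by simp [← map_star_of_map_star_mul_self_nonneg hφ]
  re_inner_nonneg a := (Complex.nonneg_iff.1 (hφ a)).1
  add_left a b c := by simp [add_mul]
  smul_left a b r := by simp

theorem tendsto_map_zero_of_asymptotically_orthogonal (hφ : ∀ a, 0 ≤ φ (star a * a))
    {l : Filter ι} {w : ι → A} {C : ℝ} (hC : ∀ i, (φ (star (w i) * w i)).re ≤ C)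
    (hw : ∀ j, Tendsto (fun i => φ (star (w j) * w i)) l (𝓝 0)) :
    Tendsto (fun i => φ (w i)) l (𝓝 0) := by
  let := gnsCore hφ
  let : SeminormedAddCommGroup A := InnerProductSpace.Core.toSeminormedAddCommGroup (𝕜 := ℂ)
  let : InnerProductSpace ℂ A := InnerProductSpace.ofCore (gnsCore hφ)
  have norm_le (i : ι) : ‖w i‖ ≤ √C := Real.sqrt_le_sqrt (hC i)
  have inner_one_left (a : A) : ⟪1, a⟫_ℂ = φ a := by
    change φ (star 1 * a) = φ a
    rw [star_one, one_mul]
  simpa only [inner_one_left] using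
    tendsto_inner_zero_of_asymptotically_orthogonal (𝕜 := ℂ) norm_le hw 1

end PositiveFunctional

section UltralimitMean

open scoped BigOperators lp ENNReal ComplexOrder

variable {ι X : Type*}

/-- The sets `F i` are asymptotically invariant under `σ` along `l`. This is the condition on which
both halves of the notion of a double Følner sequence are built. -/
def IsAsymptoticallyInvariant (l : Filter ι) (F : ι → Finset X) (σ : X → X) : Prop :=
  Tendsto (fun i => ((F i ∩ (F i).image σ).card : ℝ) / ((F i).card : ℝ)) l (𝓝 1)

/-- Invariance of a functional on `ℓ^∞(X, ℂ)` under composition with `σ`. The composite `f ∘ σ` is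
represented by any `g` with the right values, which avoids bundling it as an element of `ℓ^∞`. -/
def IsCompInvariant (φ : ℓ^∞(X, ℂ) →ₗ[ℂ] ℂ) (σ : X → X) : Prop :=
  ∀ ⦃f g : ℓ^∞(X, ℂ)⦄, (∀ x, g x = f (σ x)) → φ g = φ f

lemma norm_sum_comp_sub_sum_le {E : Type*} [SeminormedAddCommGroup E] (s : Finset X) {σ : X → X}
    (hσ : σ.Injective) {f : X → E} {C : ℝ} (hf : ∀ x, ‖f x‖ ≤ C) :
    ‖∑ x ∈ s, f (σ x) - ∑ x ∈ s, f x‖ ≤ 2 * C * (s.card - (s ∩ s.image σ).card) := by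
  have hcard : (s.image σ).card = s.card := Finset.card_image_of_injective s hσ
  have card_sdiff_image : ((s \ s.image σ).card : ℝ) = s.card - (s ∩ s.image σ).card := by
    rw [eq_sub_iff_add_eq']
    exact_mod_cast Finset.card_inter_add_card_sdiff s (s.image σ)
  have card_image_sdiff : ((s.image σ \ s).card : ℝ) = s.card - (s ∩ s.image σ).card := by
    rw [eq_sub_iff_add_eq', Finset.inter_comm, ← hcard]
    exact_mod_cast Finset.card_inter_add_card_sdiff (s.image σ) s
  have norm_sum_le (t : Finset X) : ‖∑ x ∈ t, f x‖ ≤ t.card * C :=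
    (norm_sum_le_of_le t fun x _ => hf x).trans_eq (by simp)
  calc ‖∑ x ∈ s, f (σ x) - ∑ x ∈ s, f x‖
      = ‖∑ x ∈ s.image σ \ s, f x - ∑ x ∈ s \ s.image σ, f x‖ := by
        rw [Finset.sum_sdiff_sub_sum_sdiff, Finset.sum_image hσ.injOn]
    _ ≤ (s.image σ \ s).card * C + (s \ s.image σ).card * C :=
        (norm_sub_le _ _).trans (add_le_add (norm_sum_le _) (norm_sum_le _))
    _ = 2 * C * (s.card - (s ∩ s.image σ).card) := by rw [card_sdiff_image, card_image_sdiff]; ring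

lemma tendsto_expect_comp_sub_expect {l : Filter ι} {F : ι → Finset X} {σ : X → X}
    (hσ : σ.Injective) (hF : IsAsymptoticallyInvariant l F σ) (f : ℓ^∞(X, ℂ)) :
    Tendsto (fun i => 𝔼 x ∈ F i, f (σ x) - 𝔼 x ∈ F i, f x) l (𝓝 0) := by
  have bound_tendsto : Tendsto (fun i => 2 * ‖f‖ *
      (1 - ((F i ∩ (F i).image σ).card : ℝ) / ((F i).card : ℝ))) l (𝓝 0) := by
    simpa using (hF.const_sub 1).const_mul (2 * ‖f‖)
  refine squeeze_zero_norm (fun i => ?_) bound_tendsto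
  rcases (F i).eq_empty_or_nonempty with hi | hi
  · simp [hi]
  have card_pos : (0 : ℝ) < (F i).card := by exact_mod_cast hi.card_pos
  rw [Finset.expect_eq_sum_div_card, Finset.expect_eq_sum_div_card, ← sub_div, norm_div,
    Complex.norm_natCast, div_le_iff₀ card_pos]
  refine (norm_sum_comp_sub_sum_le (F i) hσ
    (lp.norm_apply_le_norm ENNReal.top_ne_zero f)).trans_eq ?_
  field_simp

lemma tendsto_expect_limUnder (U : Ultrafilter ι) (F : ι → Finset X) (f : ℓ^∞(X, ℂ)) :
    Tendsto (fun i => 𝔼 x ∈ F i, f x) U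
      (𝓝 (limUnder (U : Filter ι) fun i => 𝔼 x ∈ F i, f x)) := by
  have norm_le (i : ι) : ‖𝔼 x ∈ F i, f x‖ ≤ ‖f‖ := by
    rcases (F i).eq_empty_or_nonempty with hi | hi
    · simp [hi]
    · exact (RCLike.norm_expect_le (K := ℂ)).trans
        (Finset.expect_le hi fun x _ => lp.norm_apply_le_norm ENNReal.top_ne_zero f x)
  obtain ⟨c, -, hc⟩ := (isCompact_closedBall (0 : ℂ) ‖f‖).ultrafilter_le_nhds'
    (U.map fun i => 𝔼 x ∈ F i, f x)
    (Eventually.of_forall (f := (U : Filter ι)) fun i => mem_closedBall_zero_iff.2 (norm_le i))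
  exact tendsto_nhds_limUnder ⟨c, hc⟩

/-- The limit along the ultrafilter `U` of the averages over the sets `F i`, as a functional on
`ℓ^∞(X, ℂ)`. -/
noncomputable def ultralimitMean (U : Ultrafilter ι) (F : ι → Finset X) :
    ℓ^∞(X, ℂ) →ₗ[ℂ] ℂ where
  toFun f := limUnder (U : Filter ι) fun i => 𝔼 x ∈ F i, f x
  map_add' f g := ((tendsto_expect_limUnder U F f).add (tendsto_expect_limUnder U F g)).congr
    (fun i => (Finset.expect_add_distrib (F i) f g).symm) |>.limUnder_eq
  map_smul' c f := ((tendsto_expect_limUnder U F f).const_mul c).congr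
    (fun i => Finset.mul_expect (F i) f c) |>.limUnder_eq

lemma tendsto_expect_ultralimitMean (U : Ultrafilter ι) (F : ι → Finset X) (f : ℓ^∞(X, ℂ)) :
    Tendsto (fun i => 𝔼 x ∈ F i, f x) U (𝓝 (ultralimitMean U F f)) :=
  tendsto_expect_limUnder U F f

lemma ultralimitMean_star_mul_self_nonneg (U : Ultrafilter ι) (F : ι → Finset X)
    (f : ℓ^∞(X, ℂ)) : 0 ≤ ultralimitMean U F (star f * f) :=
  ge_of_tendsto' (tendsto_expect_ultralimitMean U F _) fun _ =>
    Finset.expect_nonneg fun x _ => star_mul_self_nonneg (f x)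

lemma isCompInvariant_ultralimitMean {U : Ultrafilter ι} {F : ι → Finset X} {σ : X → X}
    (hσ : σ.Injective) (hF : IsAsymptoticallyInvariant U F σ) :
    IsCompInvariant (ultralimitMean U F) σ := by
  intro f g hg
  have hsub := (tendsto_expect_ultralimitMean U F g).sub (tendsto_expect_ultralimitMean U F f)
  simp only [hg] at hsub
  exact sub_eq_zero.1 (tendsto_nhds_unique hsub (tendsto_expect_comp_sub_expect hσ hF f))

end UltralimitMean

section UnimodularFunction

open scoped lp ENNReal ComplexOrder

variable {ι X : Type*}

/-- A unimodular function, as an element of `ℓ^∞(X, ℂ)`. -/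
noncomputable def ofCircle (u : X → Circle) : ℓ^∞(X, ℂ) :=
  ⟨fun x => u x, memℓp_infty ⟨1, by rintro _ ⟨x, rfl⟩; exact (Circle.norm_coe (u x)).le⟩⟩

@[simp]
lemma ofCircle_apply (u : X → Circle) (x : X) : ofCircle u x = u x := rfl

lemma star_ofCircle_mul_ofCircle (u v : X → Circle) :
    star (ofCircle u) * ofCircle v = ofCircle (u⁻¹ * v) := by
  ext x
  simp [← Circle.coe_inv_eq_conj]

variable {φ : ℓ^∞(X, ℂ) →ₗ[ℂ] ℂ}

lemma tendsto_map_ofCircle_zero_of_asymptotically_orthogonal (hφ : ∀ f, 0 ≤ φ (star f * f))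
    {l : Filter ι} {u : ι → X → Circle}
    (hu : ∀ j, Tendsto (fun i => φ (ofCircle ((u j)⁻¹ * u i))) l (𝓝 0)) :
    Tendsto (fun i => φ (ofCircle (u i))) l (𝓝 0) := by
  refine tendsto_map_zero_of_asymptotically_orthogonal hφ (C := (φ (ofCircle 1)).re) ?_ ?_
  · intro i
    rw [star_ofCircle_mul_ofCircle, inv_mul_cancel]
  · simpa only [star_ofCircle_mul_ofCircle] using hu

lemma star_single_mul_single (x y : X) :
    (star (lp.single ∞ x 1) * lp.single ∞ y 1 : ℓ^∞(X, ℂ)) =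
      if x = y then lp.single ∞ x 1 else 0 := by
  ext z
  rcases eq_or_ne x y with rfl | hxy
  · by_cases hz : z = x <;> simp [hz]
  · by_cases hz : z = x <;> simp [Pi.single_apply, hz, hxy]

lemma map_single_eq_zero_of_isCompInvariant_add [AddGroup X] [Infinite X]
    (hφ : ∀ f, 0 ≤ φ (star f * f)) (hadd : ∀ a, IsCompInvariant φ (· + a)) (x : X) :
    φ (lp.single ∞ x 1) = 0 := by
  have map_single_eq (y : X) : φ (lp.single ∞ y 1) = φ (lp.single ∞ x 1) :=
    hadd (-y + x) fun z => by
      simp [Pi.single_apply, ← add_assoc, ← eq_sub_iff_add_eq]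
  have tendsto_single : Tendsto (fun y => φ (lp.single ∞ y 1)) cofinite (𝓝 0) := by
    refine tendsto_map_zero_of_asymptotically_orthogonal hφ
      (C := (φ (lp.single ∞ x 1)).re) (fun y => ?_) fun y => ?_
    · rw [star_single_mul_single, if_pos rfl, map_single_eq]
    · refine tendsto_const_nhds.congr' ?_
      filter_upwards [eventually_cofinite_ne y] with z hz
      rw [star_single_mul_single, if_neg hz.symm, map_zero]
  simp only [map_single_eq] at tendsto_single
  exact tendsto_nhds_unique tendsto_const_nhds tendsto_single

end UnimodularFunction

section FiniteFibers

variable {K : Type*} [Field K]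

lemma infinite_units [Infinite K] : Infinite Kˣ :=
  unitsEquivNeZero.infinite_iff.2 (Set.finite_singleton (0 : K)).infinite_compl.to_subtype

lemma eq_or_eq_of_sub_mul_inv_sub_inv_eq {u u₀ v : Kˣ}
    (h : ((u : K) - v) * (↑u⁻¹ - ↑v⁻¹) = (u₀ - v) * (↑u₀⁻¹ - ↑v⁻¹)) :
    u = u₀ ∨ u = v ^ 2 * u₀⁻¹ := by
  have hmul : ((u : K) - u₀) * (u * u₀ - v ^ 2) = 0 := by
    simp only [Units.val_inv_eq_inv_val] at h
    field_simp at h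
    linear_combination -h
  rw [eq_mul_inv_iff_mul_eq, Units.ext_iff, Units.ext_iff]
  simpa [sub_eq_zero] using hmul

lemma tendsto_sub_mul_inv_sub_inv_cofinite (v : Kˣ) :
    Tendsto (fun u : Kˣ => ((u : K) - v) * (↑u⁻¹ - ↑v⁻¹)) cofinite cofinite := by
  refine Tendsto.cofinite_of_finite_preimage_singleton fun b => Set.Finite.to_subtype ?_
  obtain h | ⟨u₀, hu₀⟩ := Set.eq_empty_or_nonempty
    ((fun u : Kˣ => ((u : K) - v) * (↑u⁻¹ - ↑v⁻¹)) ⁻¹' {b})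
  · exact h ▸ Set.finite_empty
  · exact (Set.toFinite {u₀, v ^ 2 * u₀⁻¹}).subset fun u hu =>
      eq_or_eq_of_sub_mul_inv_sub_inv_eq (Eq.trans hu (Eq.symm hu₀))

end FiniteFibers

section KloostermanPhase

open scoped lp ENNReal ComplexOrder

variable {K : Type*} [Field K] (ξ₁ ξ₂ : AddChar K Circle)

/-- The summand `ξ₁ (a x) ξ₂ (b / x)` of a Kloosterman sum with parameters `a`, `b`. Since
`0⁻¹ = 0`, its value at `x = 0` is `1`. -/
noncomputable def kloostermanPhase (a b x : K) : Circle := ξ₁ (a * x) * ξ₂ (b * x⁻¹)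

lemma inv_kloostermanPhase_mul (a b a' b' : K) :
    (kloostermanPhase ξ₁ ξ₂ a b)⁻¹ * kloostermanPhase ξ₁ ξ₂ a' b' =
      kloostermanPhase ξ₁ ξ₂ (a' - a) (b' - b) := by
  ext1 x
  simp only [Pi.mul_apply, Pi.inv_apply, kloostermanPhase, sub_mul, AddChar.map_sub_eq_div,
    div_eq_mul_inv, mul_inv]
  ac_rfl

variable {φ : ℓ^∞(K, ℂ) →ₗ[ℂ] ℂ}

lemma map_kloostermanPhase_eq_mul_one (hmul : ∀ c : K, c ≠ 0 → IsCompInvariant φ (c * ·))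
    (a : K) {b : K} (hb : b ≠ 0) :
    φ (ofCircle (kloostermanPhase ξ₁ ξ₂ a b)) =
      φ (ofCircle (kloostermanPhase ξ₁ ξ₂ (a * b) 1)) := by
  refine (hmul b hb fun x => ?_).symm
  have hinv : b * (b * x)⁻¹ = 1 * x⁻¹ := by field_simp
  simp only [ofCircle_apply, kloostermanPhase, hinv, mul_assoc]

variable {ξ₁}

lemma map_kloostermanPhase_zero_right (hξ₁ : ξ₁ ≠ 1)
    (hadd : ∀ c, IsCompInvariant φ (· + c)) {a : K} (ha : a ≠ 0) :
    φ (ofCircle (kloostermanPhase ξ₁ ξ₂ a 0)) = 0 := by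
  obtain ⟨c, hc⟩ : ∃ c, ξ₁ c ≠ 1 := AddChar.ne_one_iff.1 hξ₁
  have hshift : φ ((ξ₁ c : ℂ) • ofCircle (kloostermanPhase ξ₁ ξ₂ a 0)) =
      φ (ofCircle (kloostermanPhase ξ₁ ξ₂ a 0)) :=
    hadd (a⁻¹ * c) fun x => by
      have harg : a * (x + a⁻¹ * c) = c + a * x := by field_simp; ring
      simp [kloostermanPhase, harg, AddChar.map_add_eq_mul]
  rw [map_smul, smul_eq_mul] at hshift
  by_contra hne
  exact hc (Circle.ext (by simpa using (mul_eq_right₀ hne).1 hshift))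

lemma tendsto_map_kloostermanPhase_one_right (hξ₁ : ξ₁ ≠ 1) (hφ : ∀ f, 0 ≤ φ (star f * f))
    (hadd : ∀ c, IsCompInvariant φ (· + c)) :
    Tendsto (fun a => φ (ofCircle (kloostermanPhase ξ₁ ξ₂ a 1))) cofinite (𝓝 0) := by
  refine tendsto_map_ofCircle_zero_of_asymptotically_orthogonal hφ fun b => ?_
  refine tendsto_const_nhds.congr' ?_
  filter_upwards [eventually_cofinite_ne b] with a hab
  rw [inv_kloostermanPhase_mul, sub_self,
    map_kloostermanPhase_zero_right ξ₂ hξ₁ hadd (sub_ne_zero.2 hab)]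

theorem map_kloostermanPhase_one_one [Infinite K] (hξ₁ : ξ₁ ≠ 1)
    (hφ : ∀ f, 0 ≤ φ (star f * f)) (hadd : ∀ c, IsCompInvariant φ (· + c))
    (hmul : ∀ c : K, c ≠ 0 → IsCompInvariant φ (c * ·)) :
    φ (ofCircle (kloostermanPhase ξ₁ ξ₂ 1 1)) = 0 := by
  have : Infinite Kˣ := infinite_units
  have map_inv_eq (u : Kˣ) : φ (ofCircle (kloostermanPhase ξ₁ ξ₂ u ↑u⁻¹)) =
      φ (ofCircle (kloostermanPhase ξ₁ ξ₂ 1 1)) := by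
    rw [map_kloostermanPhase_eq_mul_one ξ₁ ξ₂ hmul _ u⁻¹.ne_zero, Units.mul_inv]
  have tendsto_inv : Tendsto (fun u : Kˣ => φ (ofCircle (kloostermanPhase ξ₁ ξ₂ u ↑u⁻¹)))
      cofinite (𝓝 0) := by
    refine tendsto_map_ofCircle_zero_of_asymptotically_orthogonal hφ fun v => ?_
    refine ((tendsto_map_kloostermanPhase_one_right ξ₂ hξ₁ hφ hadd).comp
      (tendsto_sub_mul_inv_sub_inv_cofinite v)).congr' ?_
    filter_upwards [eventually_cofinite_ne v] with u huv
    have hsub : (↑u⁻¹ : K) - ↑v⁻¹ ≠ 0 := sub_ne_zero.2 fun h => huv (inv_injective (Units.ext h))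
    rw [inv_kloostermanPhase_mul, map_kloostermanPhase_eq_mul_one ξ₁ ξ₂ hmul _ hsub]
    rfl
  simp only [map_inv_eq] at tendsto_inv
  exact tendsto_nhds_unique tendsto_const_nhds tendsto_inv

end KloostermanPhase

section FolnerKloosterman

open scoped BigOperators lp ENNReal

variable {K : Type*} [Field K] (ξ₁ ξ₂ : AddChar K Circle)

lemma expect_kloostermanPhase_sub_single (F : Finset K) :
    𝔼 x ∈ F, (ofCircle (kloostermanPhase ξ₁ ξ₂ 1 1) - lp.single ∞ 0 1 : ℓ^∞(K, ℂ)) x =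
      (F.card : ℂ)⁻¹ * ∑ x ∈ F.erase 0, (ξ₁ x : ℂ) * (ξ₂ x⁻¹ : ℂ) := by
  rw [Finset.expect_eq_sum_div_card, div_eq_inv_mul,
    ← Finset.sum_erase F (a := 0) (by simp [kloostermanPhase])]
  congr 1
  refine Finset.sum_congr rfl fun x hx => ?_
  simp [kloostermanPhase, Finset.ne_of_mem_erase hx]

theorem statement2_general [Infinite K] {ι : Type*} {l : Filter ι} {F : ι → Finset K}
    (hadd : ∀ c, IsAsymptoticallyInvariant l F (· + c))
    (hmul : ∀ c : K, c ≠ 0 → IsAsymptoticallyInvariant l F (c * ·)) (hξ₁ : ξ₁ ≠ 1) :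
    Tendsto (fun i => ((F i).card : ℂ)⁻¹ * ∑ x ∈ (F i).erase 0, (ξ₁ x : ℂ) * (ξ₂ x⁻¹ : ℂ))
      l (𝓝 0) := by
  rw [tendsto_iff_ultrafilter]
  intro U hU
  have hφ := ultralimitMean_star_mul_self_nonneg U F
  have hφ_add (c : K) : IsCompInvariant (ultralimitMean U F) (· + c) :=
    isCompInvariant_ultralimitMean (add_left_injective c) ((hadd c).mono_left hU)
  have hφ_mul (c : K) (hc : c ≠ 0) : IsCompInvariant (ultralimitMean U F) (c * ·) :=
    isCompInvariant_ultralimitMean (mul_right_injective₀ hc) ((hmul c hc).mono_left hU)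
  have hlim := tendsto_expect_ultralimitMean U F
    (ofCircle (kloostermanPhase ξ₁ ξ₂ 1 1) - lp.single ∞ 0 1)
  rw [map_sub, map_kloostermanPhase_one_one ξ₂ hξ₁ hφ hφ_add hφ_mul,
    map_single_eq_zero_of_isCompInvariant_add hφ hφ_add, sub_zero] at hlim
  simpa only [expect_kloostermanPhase_sub_single] using hlim

end FolnerKloosterman

/-- Følner–Kloosterman sums: for a double Følner sequence `(F_n)` in a countably infinite
field `K` and additive characters `ξ₁ ≠ 1`, `ξ₂` of `K`, the averages
`(1/|F_n|) ∑_{a ∈ F_n \ {0}} ξ₁(a) ξ₂(a⁻¹)` tend to zero. -/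
theorem statement2
    {K : Type*} [Field K] [Countable K] [Infinite K]
    (F : ℕ → Finset K) (hF : IsDoubleFolner F)
    (ξ₁ ξ₂ : AddChar K Circle) (hξ₁ : ξ₁ ≠ 1) :
    Tendsto (fun n => (((F n).card : ℂ))⁻¹ *
      ∑ a ∈ (F n).erase 0, ((ξ₁ a : ℂ) * (ξ₂ a⁻¹ : ℂ))) atTop (𝓝 0) :=
  statement2_general ξ₁ ξ₂ hF.1.2 hF.2 hξ₁
end

section
/- Let K be a countable field and suppose there exists a Følner sequence (F_n) in the additive group (K,+) such that the sequence of inverse sets ((F_n \ {0})^{-1}) is also a Følner sequence in (K,+). Then K is a union of finite subfields (i.e., every element of K lies in a finite subfield of K). -/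
open Filter Topology
open scoped Classical

/-!
A subgroup of infinite index has density zero along every Følner sequence, because its cosets are
disjoint and have asymptotically equal densities. A proper valuation subring `V` of `K` has infinite
additive index, so both `V` and, passing to the inverse sets, `V⁻¹` have density zero, although
`K = V ∪ V⁻¹`. Hence `K` is its only valuation subring. The integral closure of `ℤ` in `K`, being
an intersection of valuation subrings, is then all of `K`, which forces `K` to be algebraic over a
finite prime field.
-/

open scoped Finset

section Density

variable {α β : Type*}

/-- The density of a set `S` along a finite set `F`: the proportion of the points of `F` that lie
in `S`, with value `0` when `F` is empty. -/
noncomputable def density (F : Finset α) (S : Set α) : ℝ :=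
  (#{x ∈ F | x ∈ S} : ℝ) / #F

lemma density_nonneg (F : Finset α) (S : Set α) : 0 ≤ density F S := by
  unfold density; positivity

lemma density_univ {F : Finset α} (hF : F.Nonempty) : density F Set.univ = 1 := by
  simp [density, hF.ne_empty]

lemma density_mono (F : Finset α) {S T : Set α} (hST : S ⊆ T) : density F S ≤ density F T := by
  unfold density
  gcongr

lemma density_union_le (F : Finset α) (S T : Set α) :
    density F (S ∪ T) ≤ density F S + density F T := by
  simp only [density, ← add_div, Set.mem_union, Finset.filter_or]
  gcongr
  exact_mod_cast Finset.card_union_le _ _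

lemma sum_density_fiber_le_one (F : Finset α) (f : α → β) (t : Finset β) :
    ∑ b ∈ t, density F (f ⁻¹' {b}) ≤ 1 := by
  simp only [density, ← Finset.sum_div, Set.mem_preimage, Set.mem_singleton_iff]
  refine div_le_one_of_le₀ ?_ (Nat.cast_nonneg _)
  exact_mod_cast
    (Finset.sum_card_fiberwise_eq_card_filter F t f).trans_le (Finset.card_filter_le _ _)

lemma density_image_of_injective {f : α → β} (hf : Function.Injective f) (F : Finset α)
    (S : Set β) : density (F.image f) S = density F (f ⁻¹' S) := by
  simp only [density, Finset.filter_image, Finset.card_image_of_injective _ hf, Set.mem_preimage]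

lemma density_erase_le (F : Finset α) {S : Set α} {a : α} (ha : a ∈ S) :
    density (F.erase a) S ≤ density F S := by
  by_cases haF : a ∈ F
  · have hle : (#{x ∈ F | x ∈ S} : ℝ) ≤ #F := mod_cast Finset.card_filter_le _ _
    have hfilter : (#{x ∈ F.erase a | x ∈ S} : ℝ) = #{x ∈ F | x ∈ S} - 1 := by
      rw [Finset.filter_erase, Finset.cast_card_erase_of_mem (by simp [haF, ha])]
    have herase : (#(F.erase a) : ℝ) = #F - 1 := Finset.cast_card_erase_of_mem haF
    have hF : (0 : ℝ) < #F := mod_cast Finset.card_pos.2 ⟨a, haF⟩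
    have herase_nonneg : (0 : ℝ) ≤ #F - 1 := herase ▸ Nat.cast_nonneg _
    rw [density, density, hfilter, herase]
    refine div_le_of_le_mul₀ herase_nonneg (by positivity) ?_
    rw [div_mul_eq_mul_div, le_div_iff₀ hF]
    linarith
  · rw [Finset.erase_eq_of_notMem haF]

end Density

lemma density_le_density_preimage_sub_add {A : Type*} [AddGroup A] (F : Finset A) (S : Set A)
    (a : A) :
    density F S ≤
      density F ((· - a) ⁻¹' S) + (1 - (#(F ∩ F.image (· + a)) : ℝ) / #F) := by
  rcases F.eq_empty_or_nonempty with rfl | hF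
  · simp [density]
  have himage : (#(F.image (· + a)) : ℝ) = #F := by
    rw [Finset.card_image_of_injective _ (add_left_injective a)]
  have hsubset : ({x ∈ F | x ∈ S} : Finset A).image (· + a) ⊆
      {x ∈ F | x ∈ (· - a) ⁻¹' S} ∪ (F.image (· + a) \ F) := by
    simp only [Finset.subset_iff, Finset.mem_image, Finset.mem_union, Finset.mem_filter,
      Finset.mem_sdiff, Set.mem_preimage]
    rintro _ ⟨x, ⟨hxF, hxS⟩, rfl⟩
    by_cases hxa : x + a ∈ F
    · exact .inl ⟨hxa, by rwa [add_sub_cancel_right]⟩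
    · exact .inr ⟨⟨x, hxF, rfl⟩, hxa⟩
  have hcard : (#{x ∈ F | x ∈ S} : ℝ) ≤
      #{x ∈ F | x ∈ (· - a) ⁻¹' S} + #(F.image (· + a) \ F) := by
    rw [← Finset.card_image_of_injective _ (add_left_injective a)]
    exact_mod_cast (Finset.card_le_card hsubset).trans (Finset.card_union_le _ _)
  have hsdiff : (#(F.image (· + a) \ F) : ℝ) = #F - #(F ∩ F.image (· + a)) := by
    rw [eq_sub_iff_add_eq, Finset.inter_comm, ← himage]
    exact_mod_cast Finset.card_sdiff_add_card_inter _ F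
  have hF0 : (#F : ℝ) ≠ 0 := by simpa using hF.ne_empty
  rw [density, density, one_sub_div hF0, ← add_div]
  gcongr
  rwa [← hsdiff]

lemma card_mul_density_addSubgroup_le {A : Type*} [AddGroup A] (F : Finset A) (S : AddSubgroup A)
    [S.Normal] (t : Finset (A ⧸ S)) :
    #t * density F S ≤
      1 + ∑ c ∈ t, (1 - (#(F ∩ F.image (· + c.out)) : ℝ) / #F) := by
  have coset_eq (c : A ⧸ S) : (· - c.out) ⁻¹' (S : Set A) = (↑) ⁻¹' {c} := by
    ext x
    rw [Set.mem_preimage, SetLike.mem_coe, ← QuotientAddGroup.eq_zero_iff, QuotientAddGroup.mk_sub,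
      QuotientAddGroup.out_eq', sub_eq_zero, Set.mem_preimage, Set.mem_singleton_iff]
  calc #t * density F S
      = ∑ _c ∈ t, density F S := by rw [Finset.sum_const, nsmul_eq_mul]
    _ ≤ ∑ c ∈ t, (density F ((↑) ⁻¹' {c}) + (1 - (#(F ∩ F.image (· + c.out)) : ℝ) / #F)) := by
        gcongr with c _
        rw [← coset_eq c]
        exact density_le_density_preimage_sub_add F S c.out
    _ ≤ 1 + ∑ c ∈ t, (1 - (#(F ∩ F.image (· + c.out)) : ℝ) / #F) := by
        rw [Finset.sum_add_distrib]
        gcongr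
        exact sum_density_fiber_le_one F _ t

theorem IsAddFolner.tendsto_density_of_index_eq_zero {A : Type*} [AddCommGroup A]
    {F : ℕ → Finset A} (hF : IsAddFolner F) {S : AddSubgroup A} (hS : S.index = 0) :
    Tendsto (fun n ↦ density (F n) S) atTop (𝓝 0) := by
  have : Infinite (A ⧸ S) := AddSubgroup.index_eq_zero_iff_infinite.1 hS
  have eventually_le (k : ℕ) : ∀ᶠ n in atTop, k * density (F n) S < 2 := by
    obtain ⟨t, rfl⟩ := Infinite.exists_subset_card_eq (A ⧸ S) k
    have hlim : Tendsto (fun n ↦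
        1 + ∑ c ∈ t, (1 - (#(F n ∩ (F n).image (· + c.out)) : ℝ) / #(F n))) atTop (𝓝 1) := by
      simpa using (tendsto_finsetSum t fun c _ ↦ (hF.2 c.out).const_sub 1).const_add 1
    filter_upwards [hlim.eventually_lt_const one_lt_two] with n hn
    exact (card_mul_density_addSubgroup_le (F n) S t).trans_lt hn
  refine tendsto_order.2 ⟨fun ε hε ↦ .of_forall fun n ↦ hε.trans_le (density_nonneg _ _),
    fun ε hε ↦ ?_⟩
  obtain ⟨k, hk⟩ := exists_nat_gt (2 / ε)
  filter_upwards [eventually_le k] with n hn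
  rw [div_lt_iff₀ hε] at hk
  exact lt_of_mul_lt_mul_left (hn.trans hk) k.cast_nonneg

lemma valuation_integer_index_eq_zero {R Γ₀ : Type*} [Ring R] [LinearOrderedCommGroupWithZero Γ₀]
    (v : Valuation R Γ₀) {c : R} (hc : 1 < v c) : v.integer.toAddSubgroup.index = 0 := by
  have one_lt_pow_sub {i j : ℕ} (hij : i < j) : 1 < v (c ^ j - c ^ i) := by
    have hlt : v (c ^ i) < v (c ^ j) := by
      simpa only [map_pow] using pow_lt_pow_right₀ hc hij
    rw [Valuation.map_sub_eq_of_lt_left _ hlt, map_pow]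
    exact one_lt_pow₀ hc (Nat.ne_zero_of_lt hij)
  have pow_injective : Function.Injective
      fun i : ℕ ↦ (↑(c ^ i) : R ⧸ v.integer.toAddSubgroup) := by
    refine .of_lt_imp_ne fun i j hij heq ↦ (one_lt_pow_sub hij).not_ge ?_
    rw [sub_eq_neg_add]
    exact QuotientAddGroup.eq.1 heq
  exact AddSubgroup.index_eq_zero_iff_infinite.2 (.of_injective _ pow_injective)

section Field

variable {K : Type*} [Field K]

lemma one_le_density_inv_add_density {F : Finset K} (V : ValuationSubring K)
    (hF : (F.erase 0).Nonempty) :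
    1 ≤ density ((F.erase 0).image (·⁻¹)) V + density F V := by
  set G : Finset K := (F.erase 0).image (·⁻¹) with hG
  have density_inv_le : density G ((·⁻¹) ⁻¹' V) ≤ density F V := by
    rw [hG, density_image_of_injective inv_injective, ← Set.preimage_comp,
      inv_involutive.comp_self, Set.preimage_id]
    exact density_erase_le F V.zero_mem
  calc (1 : ℝ) = density G Set.univ := (density_univ (hF.image _)).symm
    _ ≤ density G (V ∪ (·⁻¹) ⁻¹' V) := density_mono G fun x _ ↦ V.mem_or_inv_mem x
    _ ≤ density G V + density G ((·⁻¹) ⁻¹' V) := density_union_le G _ _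
    _ ≤ density G V + density F V := by gcongr

theorem valuationSubring_eq_top_of_isAddFolner {F : ℕ → Finset K} (hF : IsAddFolner F)
    (hFinv : IsAddFolner fun n ↦ ((F n).erase 0).image (·⁻¹)) (V : ValuationSubring K) :
    V = ⊤ := by
  by_contra hV
  obtain ⟨c, hc⟩ : ∃ c, c ∉ V := by simpa [SetLike.ext_iff] using hV
  have one_lt_c : 1 < V.valuation c := not_le.1 (mt (V.valuation_le_one_iff c).1 hc)
  have coe_eq : (V.valuation.integer.toAddSubgroup : Set K) = V :=
    Set.ext V.valuation_le_one_iff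
  have density_tendsto_zero {E : ℕ → Finset K} (hE : IsAddFolner E) :
      Tendsto (fun n ↦ density (E n) (V : Set K)) atTop (𝓝 0) :=
    coe_eq ▸ hE.tendsto_density_of_index_eq_zero (valuation_integer_index_eq_zero _ one_lt_c)
  have one_le_zero : (1 : ℝ) ≤ 0 + 0 :=
    ge_of_tendsto' ((density_tendsto_zero hFinv).add (density_tendsto_zero hF))
      fun n ↦ one_le_density_inv_add_density V (Finset.image_nonempty.1 (hFinv.1 n))
  norm_num at one_le_zero

lemma isIntegral_of_forall_valuationSubring_eq_top (R : Type*) [CommRing R] [Algebra R K]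
    (hK : ∀ V : ValuationSubring K, V = ⊤) : Algebra.IsIntegral R K := by
  have : IsIntegrallyClosedIn (integralClosure R K).toSubring K :=
    inferInstanceAs (IsIntegrallyClosedIn (integralClosure R K) K)
  refine ⟨fun x ↦ by_contra fun hx ↦ ?_⟩
  obtain ⟨V, -, hxV⟩ :=
    (integralClosure R K).toSubring.exists_le_valuationSubring_of_isIntegrallyClosedIn hx
  exact hxV (hK V ▸ ValuationSubring.mem_top x)

lemma exists_charP_prime_of_isIntegral_int [Algebra.IsIntegral ℤ K] :
    ∃ p, p.Prime ∧ CharP K p := by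
  obtain ⟨p, hp⟩ := CharP.exists K
  refine ⟨p, (CharP.char_is_prime_or_zero K p).resolve_right ?_, hp⟩
  rintro rfl
  have : CharZero K := CharP.charP_to_charZero K
  exact Int.not_isField <|
    (Algebra.IsIntegral.isField_iff_isField (algebraMap ℤ K).injective_int).2 (Field.toIsField K)

theorem exists_finite_subfield_mem_of_isIntegral_int [Algebra.IsIntegral ℤ K] (x : K) :
    ∃ S : Subfield K, (S : Set K).Finite ∧ x ∈ S := by
  obtain ⟨p, hp, _⟩ := exists_charP_prime_of_isIntegral_int (K := K)
  have : Fact p.Prime := ⟨hp⟩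
  let : Algebra (ZMod p) K := ZMod.algebra K p
  have hx : IsIntegral (ZMod p) x := (Algebra.IsIntegral.isIntegral (R := ℤ) x).tower_top
  have := IntermediateField.adjoin.finiteDimensional hx
  have : Finite (IntermediateField.adjoin (ZMod p) {x}) := Module.finite_of_finite (ZMod p)
  exact ⟨(IntermediateField.adjoin (ZMod p) {x}).toSubfield, Set.toFinite _,
    IntermediateField.mem_adjoin_simple_self _ x⟩

end Field

/-- If a countable field `K` admits an additive Følner sequence `(F_n)` such that the
sequence of inverse sets `((F_n \ {0})⁻¹)` is also an additive Følner sequence, then `K`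
is a union of finite subfields. -/
theorem statement3
    {K : Type*} [Field K] [Countable K]
    (F : ℕ → Finset K) (hF : IsAddFolner F)
    (hFinv : IsAddFolner (fun n => ((F n).erase 0).image (·⁻¹))) :
    ∀ x : K, ∃ S : Subfield K, (S : Set K).Finite ∧ x ∈ S := by
  have : Algebra.IsIntegral ℤ K :=
    isIntegral_of_forall_valuationSubring_eq_top ℤ
      (valuationSubring_eq_top_of_isAddFolner hF hFinv)
  exact exists_finite_subfield_mem_of_isIntegral_int
end

section
/- Let K be a countable subfield of ℝ. Then for every continuous character ξ of the additive group (ℝ,+) and every double Følner sequence (F_n) in K, the sequence u_n = (1/|F_n|) Σ_{a ∈ F_n \ {0}} ξ(a^{-1}) does not converge to 0 as n → ∞. -/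
/-!
A bounded set in an unbounded group has infinitely many pairwise disjoint translates, and all of
them occupy asymptotically the same proportion of a Følner sequence, so this proportion tends
to `0`. Outside a large bounded set `a⁻¹` is close to `0`, hence `ξ a⁻¹` is close to `ξ 0`, and
therefore the averages converge to `ξ 0`, a point of the unit circle.
-/

open Filter Topology
open scoped Classical

open Bornology
open scoped Pointwise

/-- The proportion `|s ∩ B| / |s|` of the points of a finite set `s` that lie in a set `B`; the
statement that it tends to `0` along a Følner sequence says that `B` has density zero. For empty
`s` the value is `0`. -/
noncomputable def relDensity {α : Type*} (B : Set α) (s : Finset α) : ℝ :=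
  (s.filter (· ∈ B)).card / s.card

section RelDensity

variable {α : Type*}

lemma relDensity_nonneg (B : Set α) (s : Finset α) : 0 ≤ relDensity B s := by
  unfold relDensity
  positivity

lemma sum_relDensity_le_one {ι : Type*} (t : Finset ι) {B : ι → Set α}
    (hB : Pairwise (Function.onFun Disjoint B)) (s : Finset α) :
    ∑ i ∈ t, relDensity (B i) s ≤ 1 := by
  have hdisj : (t : Set ι).PairwiseDisjoint fun i => s.filter (· ∈ B i) := fun i _ j _ hij =>
    Finset.disjoint_filter.2 fun _ _ hi hj => Set.disjoint_left.1 (hB hij) hi hj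
  have hcard : ∑ i ∈ t, (s.filter (· ∈ B i)).card ≤ s.card := by
    rw [← Finset.card_biUnion hdisj]
    exact Finset.card_le_card (Finset.biUnion_subset.2 fun _ _ => Finset.filter_subset _ _)
  simp only [relDensity, ← Finset.sum_div]
  exact div_le_one_of_le₀ (mod_cast hcard) (Nat.cast_nonneg _)

lemma norm_average_sub_le {𝕜 E : Type*} [RCLike 𝕜] [SeminormedAddCommGroup E] [NormedSpace 𝕜 E]
    {s : Finset α} (hs : s.Nonempty) {f : α → E} {L : E} {B : Set α} {ε M : ℝ} (hε : 0 ≤ ε)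
    (hM : ∀ x, ‖f x - L‖ ≤ M) (hB : ∀ x ∉ B, ‖f x - L‖ ≤ ε) :
    ‖(s.card : 𝕜)⁻¹ • ∑ x ∈ s, f x - L‖ ≤ ε + M * relDensity B s := by
  have hpos : (0 : ℝ) < s.card := mod_cast hs.card_pos
  have hne : (s.card : 𝕜) ≠ 0 := mod_cast hs.card_pos.ne'
  have hpoint : ∀ x ∈ s, ‖f x - L‖ ≤ ε + if x ∈ B then M else 0 := by
    intro x _
    split_ifs with hx
    · linarith [hM x]
    · linarith [hB x hx]
  have hsum : ‖∑ x ∈ s, (f x - L)‖ ≤ s.card * ε + (s.filter (· ∈ B)).card * M :=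
    (norm_sum_le_of_le s hpoint).trans_eq <| by
      rw [Finset.sum_add_distrib, ← Finset.sum_filter, Finset.sum_const, Finset.sum_const,
        nsmul_eq_mul, nsmul_eq_mul]
  calc ‖(s.card : 𝕜)⁻¹ • ∑ x ∈ s, f x - L‖
      = ‖(s.card : 𝕜)⁻¹ • ∑ x ∈ s, (f x - L)‖ := by
        rw [Finset.sum_sub_distrib, Finset.sum_const, smul_sub, ← Nat.cast_smul_eq_nsmul 𝕜,
          inv_smul_smul₀ hne]
    _ = (s.card : ℝ)⁻¹ * ‖∑ x ∈ s, (f x - L)‖ := by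
        rw [norm_smul, norm_inv, RCLike.norm_natCast]
    _ ≤ (s.card : ℝ)⁻¹ * (s.card * ε + (s.filter (· ∈ B)).card * M) := by gcongr
    _ = ε + M * relDensity B s := by
        rw [relDensity, mul_add, inv_mul_cancel_left₀ hpos.ne']
        ring

end RelDensity

section AddCommGroup

variable {G : Type*} [AddCommGroup G] {F : ℕ → Finset G}

lemma card_filter_mem_le_card_filter_mem_vadd_add (B : Set G) (c : G) (s : Finset G) :
    (s.filter (· ∈ B)).card ≤ (s.filter (· ∈ c +ᵥ B)).card + (s.image (· + c) \ s).card := by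
  have hsub : (s.filter (· ∈ B)).image (· + c) ⊆
      s.filter (· ∈ c +ᵥ B) ∪ (s.image (· + c) \ s) := by
    intro y hy
    obtain ⟨x, hx, rfl⟩ := Finset.mem_image.1 hy
    obtain ⟨hxs, hxB⟩ := Finset.mem_filter.1 hx
    have hxc : x + c ∈ c +ᵥ B := ⟨x, hxB, add_comm c x⟩
    by_cases hs : x + c ∈ s
    · exact Finset.mem_union_left _ (Finset.mem_filter.2 ⟨hs, hxc⟩)
    · exact Finset.mem_union_right _
        (Finset.mem_sdiff.2 ⟨Finset.mem_image_of_mem _ hxs, hs⟩)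
  calc (s.filter (· ∈ B)).card
      = ((s.filter (· ∈ B)).image (· + c)).card :=
        (Finset.card_image_of_injective _ (add_left_injective c)).symm
    _ ≤ (s.filter (· ∈ c +ᵥ B) ∪ (s.image (· + c) \ s)).card := Finset.card_le_card hsub
    _ ≤ _ := Finset.card_union_le _ _

lemma relDensity_le_relDensity_vadd_add {s : Finset G} (hs : s.Nonempty) (B : Set G) (c : G) :
    relDensity B s ≤
      relDensity (c +ᵥ B) s + (1 - ((s ∩ s.image (· + c)).card : ℝ) / s.card) := by
  have hpos : (0 : ℝ) < s.card := mod_cast hs.card_pos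
  have hsplit : (s.image (· + c) \ s).card + (s ∩ s.image (· + c)).card = s.card := by
    rw [Finset.inter_comm, Finset.card_sdiff_add_card_inter,
      Finset.card_image_of_injective _ (add_left_injective c)]
  have hcard : ((s.filter (· ∈ B)).card : ℝ) ≤
      (s.filter (· ∈ c +ᵥ B)).card + (s.card - (s ∩ s.image (· + c)).card) := by
    rw [← hsplit, Nat.cast_add, add_sub_cancel_right]
    exact_mod_cast card_filter_mem_le_card_filter_mem_vadd_add B c s
  rw [relDensity, relDensity, ← div_self hpos.ne', ← sub_div, ← add_div]
  gcongr

lemma IsAddFolner.eventually_mul_relDensity_le_two (hF : IsAddFolner F) {B : Set G} {c : ℕ → G}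
    (hc : Pairwise (Function.onFun Disjoint fun j => c j +ᵥ B)) (k : ℕ) :
    ∀ᶠ n in atTop, k * relDensity B (F n) ≤ 2 := by
  let defect (n j : ℕ) : ℝ := 1 - ((F n ∩ (F n).image (· + c j)).card : ℝ) / (F n).card
  have hdefect : Tendsto (fun n => ∑ j ∈ Finset.range k, defect n j) atTop (𝓝 0) := by
    simpa only [sub_self, Finset.sum_const_zero] using
      tendsto_finsetSum (Finset.range k) fun j _ => (hF.2 (c j)).const_sub 1
  filter_upwards [hdefect.eventually_le_const one_pos] with n hn
  calc k * relDensity B (F n)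
      = ∑ _j ∈ Finset.range k, relDensity B (F n) := by
        rw [Finset.sum_const, Finset.card_range, nsmul_eq_mul]
    _ ≤ ∑ j ∈ Finset.range k, (relDensity (c j +ᵥ B) (F n) + defect n j) :=
        Finset.sum_le_sum fun j _ => relDensity_le_relDensity_vadd_add (hF.1 n) B (c j)
    _ = ∑ j ∈ Finset.range k, relDensity (c j +ᵥ B) (F n) +
          ∑ j ∈ Finset.range k, defect n j := Finset.sum_add_distrib
    _ ≤ 1 + 1 := add_le_add (sum_relDensity_le_one _ hc _) hn
    _ = 2 := one_add_one_eq_two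

lemma IsAddFolner.tendsto_relDensity_zero_of_pairwise_disjoint (hF : IsAddFolner F) {B : Set G}
    {c : ℕ → G} (hc : Pairwise (Function.onFun Disjoint fun j => c j +ᵥ B)) :
    Tendsto (fun n => relDensity B (F n)) atTop (𝓝 0) := by
  refine tendsto_order.2
    ⟨fun a ha => .of_forall fun n => ha.trans_le (relDensity_nonneg B (F n)), fun ε hε => ?_⟩
  obtain ⟨k, hk⟩ := exists_nat_gt (2 / ε)
  have hk_pos : (0 : ℝ) < k := (div_pos two_pos hε).trans hk
  filter_upwards [hF.eventually_mul_relDensity_le_two hc k] with n hn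
  calc relDensity B (F n) ≤ 2 / k := (le_div_iff₀' hk_pos).2 hn
    _ < ε := (div_lt_comm₀ hε hk_pos).1 hk

end AddCommGroup

section SeminormedAddCommGroup

variable {G : Type*} [SeminormedAddCommGroup G] [NeBot (cobounded G)]

lemma exists_seq_pairwise_disjoint_vadd_of_isBounded {B : Set G} (hB : IsBounded B) :
    ∃ c : ℕ → G, Pairwise (Function.onFun Disjoint fun j => c j +ᵥ B) := by
  have : Std.Symm fun x y : G => Disjoint (x +ᵥ B) (y +ᵥ B) := ⟨fun _ _ h => h.symm⟩
  obtain ⟨c, -, hc⟩ := exists_seq_of_forall_finset_exists' (fun _ : G => True)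
    (fun x y => Disjoint (x +ᵥ B) (y +ᵥ B)) fun s _ => by
      have hbdd : IsBounded ((s : Set G) + B - B) := (s.finite_toSet.isBounded.add hB).sub hB
      obtain ⟨y, hy⟩ := nonempty_of_mem (isBounded_def.1 hbdd)
      refine ⟨y, trivial, fun x hx => Set.disjoint_left.2 ?_⟩
      rintro _ ⟨b, hb, rfl⟩ ⟨b', hb', hyx⟩
      exact hy ⟨x + b, Set.add_mem_add hx hb, b', hb', (eq_sub_of_add_eq hyx).symm⟩
  exact ⟨c, hc⟩

variable {F : ℕ → Finset G}

lemma IsAddFolner.tendsto_relDensity_zero_of_isBounded (hF : IsAddFolner F) {B : Set G}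
    (hB : IsBounded B) : Tendsto (fun n => relDensity B (F n)) atTop (𝓝 0) :=
  have ⟨_, hc⟩ := exists_seq_pairwise_disjoint_vadd_of_isBounded hB
  hF.tendsto_relDensity_zero_of_pairwise_disjoint hc

lemma IsAddFolner.tendsto_average_of_tendsto_cobounded (hF : IsAddFolner F) (𝕜 : Type*) {E : Type*}
    [RCLike 𝕜] [SeminormedAddCommGroup E] [NormedSpace 𝕜 E] {f : G → E} {C : ℝ} {L : E}
    (hC : ∀ x, ‖f x‖ ≤ C) (hf : Tendsto f (cobounded G) (𝓝 L)) :
    Tendsto (fun n => ((F n).card : 𝕜)⁻¹ • ∑ x ∈ F n, f x) atTop (𝓝 L) := by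
  refine tendsto_iff_norm_sub_tendsto_zero.2 <| tendsto_order.2
    ⟨fun a ha => .of_forall fun n => ha.trans_le (norm_nonneg _), fun ε hε => ?_⟩
  let B : Set G := {x | ε / 2 < ‖f x - L‖}
  have hB : IsBounded B := by
    have hnear : ∀ᶠ x in cobounded G, ‖f x - L‖ ≤ ε / 2 :=
      (tendsto_iff_norm_sub_tendsto_zero.1 hf).eventually_le_const (half_pos hε)
    exact isBounded_def.2 (hnear.mono fun _ => not_lt.2)
  have hbound (n : ℕ) := norm_average_sub_le (𝕜 := 𝕜) (hF.1 n) (B := B) (half_pos hε).le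
    (fun x => (norm_sub_le (f x) L).trans (add_le_add_left (hC x) _)) fun x hx => not_lt.1 hx
  have hlim : Tendsto (fun n => ε / 2 + (C + ‖L‖) * relDensity B (F n)) atTop (𝓝 (ε / 2)) := by
    simpa only [mul_zero, add_zero] using
      ((hF.tendsto_relDensity_zero_of_isBounded hB).const_mul (C + ‖L‖)).const_add (ε / 2)
  filter_upwards [hlim.eventually_lt_const (half_lt_self hε)] with n hn
  exact (hbound n).trans_lt hn

end SeminormedAddCommGroup

instance cobounded_subfield_neBot {L : Type*} [NormedField L] [NormSMulClass ℤ L]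
    (K : Subfield L) : NeBot (cobounded K) := by
  have hnorm : Tendsto (fun n : ℕ => ‖(n : K)‖) atTop atTop := by
    refine tendsto_natCast_atTop_atTop.congr fun n => ?_
    exact (norm_natCast (α := L) n).symm
  exact (tendsto_norm_atTop_iff_cobounded.1 hnorm).neBot

theorem statement4_general {K 𝕜 E : Type*} [NormedDivisionRing K] [NeBot (cobounded K)]
    [DecidableEq K] [RCLike 𝕜] [SeminormedAddCommGroup E] [NormedSpace 𝕜 E]
    {φ : K → E} {C : ℝ} (hC : ∀ x, ‖φ x‖ ≤ C) (hφ : ContinuousAt φ 0)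
    {F : ℕ → Finset K} (hF : IsAddFolner F) :
    Tendsto (fun n => ((F n).card : 𝕜)⁻¹ • ∑ a ∈ (F n).erase 0, φ a⁻¹) atTop (𝓝 (φ 0)) := by
  simp only [← Finset.filter_ne', Finset.sum_filter]
  refine hF.tendsto_average_of_tendsto_cobounded 𝕜 (C := C) (fun a => ?_) ?_
  · split_ifs
    · exact hC _
    · exact norm_zero.trans_le ((norm_nonneg _).trans (hC 0))
  · have hne : ∀ᶠ a : K in cobounded K, a ≠ 0 := isBounded_def.1 (isBounded_singleton (x := 0))
    exact (hφ.tendsto.comp tendsto_inv₀_cobounded).congr' (hne.mono fun a ha => (if_pos ha).symm)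

/-- For a countable subfield `K` of `ℝ`, a continuous character `ξ` of `(ℝ,+)` and a double
Følner sequence `(F_n)` in `K`, the averages `(1/|F_n|) ∑_{a ∈ F_n \ {0}} ξ(a⁻¹)` do not
converge to `0`. -/
theorem statement4
    (K : Subfield ℝ) [Countable K]
    (ξ : ℝ → Circle) (hξcont : Continuous ξ)
    (hξhom : ∀ s t : ℝ, ξ (s + t) = ξ s * ξ t)
    (F : ℕ → Finset K) (hF : IsDoubleFolner F) :
    ¬ Tendsto (fun n => (((F n).card : ℂ))⁻¹ *
        ∑ a ∈ (F n).erase 0, (ξ ((a⁻¹ : K) : ℝ) : ℂ)) atTop (𝓝 0) := by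
  have hφ : Continuous fun x : K => (ξ x : ℂ) := by fun_prop
  have hlim := statement4_general (𝕜 := ℂ) (fun x : K => (ξ x).norm_coe.le) hφ.continuousAt hF.1
  exact fun h => (ξ 0).coe_ne_zero (tendsto_nhds_unique hlim h)
end
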